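/- arXiv:1911.04750 — 17 statements merged into one kernel-verified Lean document; each statement's English description precedes it below -/
import Mathlib

section
/- Let v : ℝ → ℝ be smooth with v(φ) > 0 for all φ ≥ φ₀, and set 𝔳(φ) = v'(φ)/(2v(φ)). If 𝔥 is a solution of the modified Hubble equation 𝔥'(x) = √(𝔥(x)² − 1) − 𝔳(x)·𝔥(x) on [φ₀, φ] with 𝔥(x) ≥ 1 for all x in [φ₀, φ], then 𝔥(φ) = (√(v(φ₀))/√(v(φ)))·𝔥(φ₀)·exp( ∫_{φ₀}^{φ} √(1 − 1/𝔥(x)²) dx ). -/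
/-! Along a solution, the logarithm of `√v * 𝔥`, i.e. `log 𝔥 + log v / 2`, has derivative
`𝔥' / 𝔥 + v' / (2 v) = √(𝔥² - 1) / 𝔥 = √(1 - 1 / 𝔥²)`: the term `𝔳 𝔥` of the equation cancels.
The right-hand side is continuous because `𝔥 ≥ 1`, so the fundamental theorem of calculus gives
its integral, and exponentiating gives the formula. -/

theorem sqrt_sq_sub_one_div {h : ℝ} (hh : 1 ≤ h) :
    Real.sqrt (h ^ 2 - 1) / h = Real.sqrt (1 - 1 / h ^ 2) := by
  have h0 : 0 < h := by linarith
  have e : 1 - 1 / h ^ 2 = (h ^ 2 - 1) / h ^ 2 := by field_simp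
  rw [e, Real.sqrt_div' _ (sq_nonneg h), Real.sqrt_sq h0.le]


/-- Let `v` be smooth with `v x > 0` for all `x ≥ φ₀`, and set
`𝔳 x = v' x / (2 * v x)`.  If `𝔥` is a solution of the modified Hubble equation
`𝔥' = √(𝔥² - 1) - 𝔳 ⬝ 𝔥` on `[φ₀, φ]` with `𝔥 x ≥ 1` on `[φ₀, φ]`, then
`𝔥 φ = (√(v φ₀)/√(v φ)) * 𝔥 φ₀ * exp (∫ x in φ₀..φ, √(1 - 1/(𝔥 x)²))`. -/
theorem separatrix_stmt2 (v 𝔥 : ℝ → ℝ) (φ₀ φ : ℝ)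
    (hv : ContDiff ℝ (⊤ : ℕ∞) v) (hvpos : ∀ x, φ₀ ≤ x → 0 < v x)
    (hφ : φ₀ ≤ φ)
    (hode : ∀ x ∈ Set.Icc φ₀ φ,
      HasDerivWithinAt 𝔥
        (Real.sqrt ((𝔥 x) ^ 2 - 1) - (deriv v x / (2 * v x)) * 𝔥 x) (Set.Icc φ₀ φ) x)
    (hge : ∀ x ∈ Set.Icc φ₀ φ, 1 ≤ 𝔥 x) :
    𝔥 φ = (Real.sqrt (v φ₀) / Real.sqrt (v φ)) * 𝔥 φ₀ *
      Real.exp (∫ x in φ₀..φ, Real.sqrt (1 - 1 / (𝔥 x) ^ 2)) := by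
  have hpos : ∀ x ∈ Set.Icc φ₀ φ, 0 < 𝔥 x := fun x hx => by linarith [hge x hx]
  have hcont : ContinuousOn 𝔥 (Set.Icc φ₀ φ) := fun x hx => (hode x hx).continuousWithinAt
  have hderiv : ∀ x ∈ Set.Icc φ₀ φ,
      HasDerivWithinAt (fun y => Real.log (𝔥 y) + Real.log (v y) / 2)
        (Real.sqrt (1 - 1 / (𝔥 x) ^ 2)) (Set.Icc φ₀ φ) x := by
    intro x hx
    have h0 := hpos x hx
    have v0 := hvpos x hx.1
    have hd : HasDerivAt v (deriv v x) x :=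
      ((hv.differentiable (by simp)) x).hasDerivAt
    have h1 := ((hode x hx).log h0.ne').add
      ((hd.hasDerivWithinAt (s := Set.Icc φ₀ φ)).log v0.ne' |>.div_const 2)
    refine h1.congr_deriv ?_
    rw [← sqrt_sq_sub_one_div (hge x hx)]
    field_simp
    ring
  have hint : IntervalIntegrable (fun x => Real.sqrt (1 - 1 / (𝔥 x) ^ 2))
      MeasureTheory.volume φ₀ φ := by
    apply ContinuousOn.intervalIntegrable_of_Icc hφ
    exact (continuousOn_const.sub (continuousOn_const.div (hcont.pow 2)
      fun x hx => (pow_pos (hpos x hx) 2).ne')).sqrt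
  have hftc := intervalIntegral.integral_eq_sub_of_hasDerivAt_of_le hφ
    (fun x hx => (hderiv x hx).continuousWithinAt)
    (fun x hx => (hderiv x (Set.Ioo_subset_Icc_self hx)).hasDerivAt (Icc_mem_nhds hx.1 hx.2)) hint
  have hexp : ∀ x ∈ Set.Icc φ₀ φ,
      Real.exp (Real.log (𝔥 x) + Real.log (v x) / 2) = 𝔥 x * Real.sqrt (v x) := by
    intro x hx
    have v0 := hvpos x hx.1
    rw [← Real.log_sqrt v0.le, Real.exp_add, Real.exp_log (hpos x hx),
      Real.exp_log (Real.sqrt_pos.2 v0)]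
  have hl := Set.left_mem_Icc.2 hφ
  have hr := Set.right_mem_Icc.2 hφ
  rw [hftc, Real.exp_sub, hexp φ hr, hexp φ₀ hl]
  have a := hpos φ₀ hl
  have b := Real.sqrt_pos.2 (hvpos φ₀ le_rfl)
  have c := Real.sqrt_pos.2 (hvpos φ hφ)
  field_simp
end

section
/- Let v : ℝ → ℝ be smooth with v(φ) > 0 for all φ ≥ φ₀, and let h₁, h₂ be solutions of the Hamilton–Jacobi equation h'(φ) = √(h(φ)² − v(φ)) defined on [φ₀, ∞) with hᵢ(φ) ≥ √(v(φ)) for all φ ≥ φ₀, and suppose h₂(φ₀) > h₁(φ₀). Set 𝔥ᵢ(φ) = hᵢ(φ)/√(v(φ)). Then (i) 𝔥₂(φ) > 𝔥₁(φ) for all φ ≥ φ₀, and (ii) the ratio 𝔥₂/𝔥₁ is strictly increasing: 𝔥₂(φ)/𝔥₁(φ) > 𝔥₂(φ')/𝔥₁(φ') whenever φ > φ' ≥ φ₀. -/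
/-!
The right-hand side `√(h² - v)` is nondecreasing in `h ≥ 0`, so the gap `h₂ - h₁` is nondecreasing as
long as it is positive; it therefore can never reach zero (`hj_gap_pos`). The factors `√v` cancel in
the ratio, leaving `h₂ / h₁`, whose derivative has the sign of `√(h₂² - v) h₁ - h₂ √(h₁² - v)`. This is
positive because squaring the two products gives the difference `v (h₂² - h₁²) > 0`
(`hj_wronskian_pos`).
-/

lemma hj_gap_pos {v h₁ h₂ : ℝ → ℝ} {φ₀ : ℝ}
    (hode₁ : ∀ φ, φ₀ ≤ φ →
      HasDerivWithinAt h₁ (Real.sqrt ((h₁ φ) ^ 2 - v φ)) (Set.Ici φ₀) φ)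
    (hode₂ : ∀ φ, φ₀ ≤ φ →
      HasDerivWithinAt h₂ (Real.sqrt ((h₂ φ) ^ 2 - v φ)) (Set.Ici φ₀) φ)
    (hnonneg : ∀ φ, φ₀ ≤ φ → 0 ≤ h₁ φ) (hinit : h₁ φ₀ < h₂ φ₀) :
    ∀ φ, φ₀ ≤ φ → h₁ φ < h₂ φ := by
  intro φ hφ
  by_contra! hcon
  have hd : ∀ x, φ₀ ≤ x → HasDerivWithinAt (fun x => h₂ x - h₁ x)
      (Real.sqrt ((h₂ x) ^ 2 - v x) - Real.sqrt ((h₁ x) ^ 2 - v x)) (Set.Ici φ₀) x :=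
    fun x hx => (hode₂ x hx).fun_sub (hode₁ x hx)
  have hcont : ContinuousOn (fun x => h₂ x - h₁ x) (Set.Ici φ₀) :=
    fun x hx => (hd x hx).continuousWithinAt
  -- `s` is the first point of `[φ₀, φ]` at which the gap fails to be positive.
  have hclosed : IsClosed (Set.Icc φ₀ φ ∩ (fun x => h₂ x - h₁ x) ⁻¹' Set.Iic 0) :=
    (hcont.mono Set.Icc_subset_Ici_self).preimage_isClosed_of_isClosed isClosed_Icc isClosed_Iic
  obtain ⟨s, ⟨⟨hs₀, hsφ⟩, hs⟩, hmin⟩ :=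
    (isCompact_Icc.of_isClosed_subset hclosed Set.inter_subset_left).exists_isLeast
      ⟨φ, ⟨hφ, le_rfl⟩, sub_nonpos.2 hcon⟩
  have hmono : MonotoneOn (fun x => h₂ x - h₁ x) (Set.Icc φ₀ s) := by
    refine monotoneOn_of_hasDerivWithinAt_nonneg (convex_Icc _ _)
      (hcont.mono Set.Icc_subset_Ici_self)
      (f' := fun x => Real.sqrt ((h₂ x) ^ 2 - v x) - Real.sqrt ((h₁ x) ^ 2 - v x)) ?_ ?_
    · intro x hx
      rw [interior_Icc] at hx ⊢
      exact (hd x hx.1.le).mono fun y hy => hy.1.le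
    · intro x hx
      rw [interior_Icc] at hx
      have hpos : h₁ x < h₂ x := by
        by_contra! h
        exact absurd (hmin ⟨⟨hx.1.le, hx.2.le.trans hsφ⟩, sub_nonpos.2 h⟩) (not_le.2 hx.2)
      have h0 := hnonneg x hx.1.le
      exact sub_nonneg.2 (Real.sqrt_le_sqrt (by gcongr))
  have h1 : h₂ φ₀ - h₁ φ₀ ≤ h₂ s - h₁ s := hmono ⟨le_rfl, hs₀⟩ ⟨hs₀, le_rfl⟩ hs₀
  have h2 : h₂ s - h₁ s ≤ 0 := hs
  linarith

lemma hj_wronskian_pos {a b w : ℝ} (hw : 0 < w) (ha : Real.sqrt w ≤ a) (hab : a < b) :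
    b * Real.sqrt (a ^ 2 - w) < Real.sqrt (b ^ 2 - w) * a := by
  have ha0 : 0 < a := (Real.sqrt_pos.2 hw).trans_le ha
  have hwa : w ≤ a ^ 2 := (Real.sqrt_le_left ha0.le).1 ha
  have hsq : a ^ 2 < b ^ 2 := by gcongr
  refine lt_of_pow_lt_pow_left₀ 2 (by positivity) ?_
  rw [mul_pow, mul_pow, Real.sq_sqrt (by linarith), Real.sq_sqrt (by linarith)]
  nlinarith [mul_pos hw (sub_pos.2 hsq)]

/-- Let `v` be smooth with `v φ > 0` for all `φ ≥ φ₀`, and let `h₁, h₂` be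
solutions of the Hamilton–Jacobi equation `h' = √(h² - v)` defined on `[φ₀, ∞)` with
`hᵢ φ ≥ √(v φ)` for all `φ ≥ φ₀`, and suppose `h₂ φ₀ > h₁ φ₀`.  Set
`𝔥ᵢ φ = hᵢ φ / √(v φ)`.  Then (i) `𝔥₂ φ > 𝔥₁ φ` for all `φ ≥ φ₀`, and (ii) the ratio
`𝔥₂/𝔥₁` is strictly increasing: `𝔥₂ φ / 𝔥₁ φ > 𝔥₂ φ' / 𝔥₁ φ'` whenever `φ > φ' ≥ φ₀`. -/
theorem separatrix_stmt3 (v h₁ h₂ : ℝ → ℝ) (φ₀ : ℝ)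
    (hv : ContDiff ℝ (⊤ : ℕ∞) v) (hvpos : ∀ φ, φ₀ ≤ φ → 0 < v φ)
    (hode₁ : ∀ φ, φ₀ ≤ φ →
      HasDerivWithinAt h₁ (Real.sqrt ((h₁ φ) ^ 2 - v φ)) (Set.Ici φ₀) φ)
    (hode₂ : ∀ φ, φ₀ ≤ φ →
      HasDerivWithinAt h₂ (Real.sqrt ((h₂ φ) ^ 2 - v φ)) (Set.Ici φ₀) φ)
    (hge₁ : ∀ φ, φ₀ ≤ φ → Real.sqrt (v φ) ≤ h₁ φ)
    (hge₂ : ∀ φ, φ₀ ≤ φ → Real.sqrt (v φ) ≤ h₂ φ)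
    (hinit : h₁ φ₀ < h₂ φ₀) :
    (∀ φ, φ₀ ≤ φ → h₁ φ / Real.sqrt (v φ) < h₂ φ / Real.sqrt (v φ)) ∧
    (∀ φ' φ, φ₀ ≤ φ' → φ' < φ →
      (h₂ φ' / Real.sqrt (v φ')) / (h₁ φ' / Real.sqrt (v φ')) <
      (h₂ φ / Real.sqrt (v φ)) / (h₁ φ / Real.sqrt (v φ))) := by
  have hpos₁ : ∀ φ, φ₀ ≤ φ → 0 < h₁ φ := fun φ hφ =>
    (Real.sqrt_pos.2 (hvpos φ hφ)).trans_le (hge₁ φ hφ)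
  have hlt := hj_gap_pos hode₁ hode₂ (fun φ hφ => (hpos₁ φ hφ).le) hinit
  refine ⟨fun φ hφ => div_lt_div_of_pos_right (hlt φ hφ) (Real.sqrt_pos.2 (hvpos φ hφ)), ?_⟩
  have hd : ∀ x, φ₀ ≤ x → HasDerivWithinAt (fun x => h₂ x / h₁ x)
      ((Real.sqrt ((h₂ x) ^ 2 - v x) * h₁ x - h₂ x * Real.sqrt ((h₁ x) ^ 2 - v x)) / (h₁ x) ^ 2)
      (Set.Ici φ₀) x :=
    fun x hx => (hode₂ x hx).fun_div (hode₁ x hx) (hpos₁ x hx).ne'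
  have hmono : StrictMonoOn (fun x => h₂ x / h₁ x) (Set.Ici φ₀) := by
    refine strictMonoOn_of_hasDerivWithinAt_pos (convex_Ici _)
      (fun x hx => (hd x hx).continuousWithinAt)
      (fun x hx => (hd x (interior_subset hx)).mono interior_subset) ?_
    intro x hx
    have hx' : φ₀ ≤ x := interior_subset hx
    exact div_pos (sub_pos.2 (hj_wronskian_pos (hvpos x hx') (hge₁ x hx') (hlt x hx')))
      (pow_pos (hpos₁ x hx') 2)
  intro φ' φ hφ' hφ
  have h0 : φ₀ ≤ φ := hφ'.trans hφ.le
  rw [div_div_div_cancel_right₀ (Real.sqrt_pos.2 (hvpos φ' hφ')).ne',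
    div_div_div_cancel_right₀ (Real.sqrt_pos.2 (hvpos φ h0)).ne']
  exact hmono hφ' h0 hφ
end

section
/- Let v : ℝ → ℝ be smooth with v(φ) > 0 for all φ ≥ φ₀, and set 𝔳(φ) = v'(φ)/(2v(φ)). If 𝔥₁ and 𝔥₂ are both solutions of the modified Hubble equation 𝔥'(φ) = √(𝔥(φ)² − 1) − 𝔳(φ)·𝔥(φ) defined on all of [φ₀, ∞) and there is a constant M such that 1 ≤ 𝔥ᵢ(φ) ≤ M for all φ ≥ φ₀ and i = 1, 2, then 𝔥₁ = 𝔥₂. That is, a bounded global solution of the modified Hubble equation, if it exists, is unique. -/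
/-!
The ratio `q = f / g` of two solutions does not see the potential: the terms `𝔳 f` and `𝔳 g` cancel
and `q' = (g √(f² - 1) - f √(g² - 1)) / g²`.
Rationalizing the numerator gives `q' ≥ (q² - 1) / (2 M²)` wherever `f ≥ g`, because
`(g √(f² - 1))² - (f √(g² - 1))² = f² - g²` while both products are at most `M²`.
So if `q a = r > 1` at some point `a`, a barrier argument shows that `q` stays above a line of positive
slope from `a` on, contradicting `q ≤ M`. Hence `f ≤ g`, and by symmetry `f = g`.
-/

/-- Lower bound on the derivative of the ratio of two solutions with values `x` and `y`. -/
lemma ratio_slope_bound {x y M : ℝ} (hy : 1 ≤ y) (hyx : y ≤ x) (hxM : x ≤ M) :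
    ((x / y) ^ 2 - 1) / (2 * M ^ 2)
      ≤ (y * Real.sqrt (x ^ 2 - 1) - x * Real.sqrt (y ^ 2 - 1)) / y ^ 2 := by
  have hs := Real.sq_sqrt (show 0 ≤ x ^ 2 - 1 by nlinarith)
  have ht := Real.sq_sqrt (show 0 ≤ y ^ 2 - 1 by nlinarith)
  have hs0 := Real.sqrt_nonneg (x ^ 2 - 1)
  have ht0 := Real.sqrt_nonneg (y ^ 2 - 1)
  set s := Real.sqrt (x ^ 2 - 1)
  set t := Real.sqrt (y ^ 2 - 1)
  have hsx : s ≤ M := by nlinarith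
  have htx : t ≤ M := by nlinarith
  have hA : y * s ≤ M ^ 2 := by nlinarith
  have hB : x * t ≤ M ^ 2 := by nlinarith
  have hA0 : 0 ≤ y * s := by positivity
  have hB0 : 0 ≤ x * t := mul_nonneg (by linarith) ht0
  have hprod : (y * s - x * t) * (y * s + x * t) = x ^ 2 - y ^ 2 := by
    linear_combination y ^ 2 * hs - x ^ 2 * ht
  have hM : 0 < M := by linarith
  have hsub : 0 ≤ y * s - x * t := by
    have : x * t ≤ y * s := by
      apply abs_le_of_sq_le_sq' _ hA0 |>.2
      nlinarith
    linarith
  have hnum : x ^ 2 - y ^ 2 ≤ (y * s - x * t) * (2 * M ^ 2) := by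
    rw [← hprod]
    exact mul_le_mul_of_nonneg_left (by linarith) hsub
  have hy0 : 0 < y := by linarith
  have heq : (x / y) ^ 2 - 1 = (x ^ 2 - y ^ 2) / y ^ 2 := by field_simp
  rw [heq, div_le_iff₀ (by positivity), div_mul_eq_mul_div]
  gcongr

/-- One half of uniqueness; the coefficient `w` of the linear term is arbitrary. -/
lemma bounded_solution_le (w f g : ℝ → ℝ) (φ₀ M : ℝ)
    (hf : ∀ φ, φ₀ ≤ φ →
      HasDerivWithinAt f (Real.sqrt ((f φ) ^ 2 - 1) - w φ * f φ) (Set.Ici φ₀) φ)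
    (hg : ∀ φ, φ₀ ≤ φ →
      HasDerivWithinAt g (Real.sqrt ((g φ) ^ 2 - 1) - w φ * g φ) (Set.Ici φ₀) φ)
    (hbf : ∀ φ, φ₀ ≤ φ → 1 ≤ f φ ∧ f φ ≤ M)
    (hbg : ∀ φ, φ₀ ≤ φ → 1 ≤ g φ ∧ g φ ≤ M) (a : ℝ) (ha : φ₀ ≤ a) : f a ≤ g a := by
  by_contra! hlt
  have hga : 0 < g a := by linarith [(hbg a ha).1]
  set r := f a / g a with hr
  have hr1 : 1 < r := (one_lt_div hga).2 hlt
  have hM : 0 < M := by linarith [(hbg a ha).1, (hbg a ha).2]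
  have hq : ∀ φ, φ₀ ≤ φ → HasDerivWithinAt (fun z => f z / g z)
      ((g φ * Real.sqrt ((f φ) ^ 2 - 1) - f φ * Real.sqrt ((g φ) ^ 2 - 1)) / (g φ) ^ 2)
      (Set.Ici φ₀) φ := by
    intro φ hφ
    have hne : g φ ≠ 0 := by linarith [(hbg φ hφ).1]
    refine ((hf φ hφ).fun_div (hg φ hφ) hne).congr_deriv ?_
    congr 1
    ring
  -- Half the guaranteed slope, so that the barrier inequality is strict.
  set c := (r ^ 2 - 1) / (4 * M ^ 2) with hc
  have hc0 : 0 < c := div_pos (by nlinarith) (by positivity)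
  have key : ∀ b, ∀ z ∈ Set.Icc a b, r + c * (z - a) ≤ f z / g z := by
    intro b
    have hline : ∀ z, HasDerivAt (fun z => r + c * (z - a)) c z := by
      intro z
      simpa using (((hasDerivAt_id z).sub_const a).const_mul c).const_add r
    apply image_le_of_deriv_right_lt_deriv_boundary' (f' := fun _ => c)
      (fun z _ => (hline z).continuousAt.continuousWithinAt)
      (fun z _ => (hline z).hasDerivWithinAt)
      (by simp [hr])
      (fun z hz => ((hq z (ha.trans hz.1)).continuousWithinAt.mono
        (fun y hy => ha.trans hy.1)))
      (fun z hz => (hq z (ha.trans hz.1)).mono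
        (Set.Ici_subset_Ici.2 (ha.trans hz.1)))
    intro z hz heq
    have hz0 := ha.trans hz.1
    have hgz := (hbg z hz0).1
    have hrq : r ≤ f z / g z := by
      rw [← heq]
      nlinarith [mul_nonneg hc0.le (sub_nonneg.2 hz.1)]
    have hgf : g z ≤ f z := (one_le_div (by linarith)).1 (hr1.le.trans hrq)
    refine lt_of_lt_of_le ?_ (ratio_slope_bound hgz hgf (hbf z hz0).2)
    calc c < (r ^ 2 - 1) / (2 * M ^ 2) := by
          have h2 : (r ^ 2 - 1) / (2 * M ^ 2) = 2 * c := by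
            rw [hc]
            field_simp
            norm_num
          linarith
      _ ≤ _ := by gcongr
  -- At `a + M / c` the line has height `r + M`, above the bound `M` on the ratio.
  have hb : a ≤ a + M / c := by linarith [div_pos hM hc0]
  have h1 := key (a + M / c) (a + M / c) ⟨hb, le_rfl⟩
  have h2 : c * (a + M / c - a) = M := by
    field_simp
    ring
  have h3 : f (a + M / c) / g (a + M / c) ≤ f (a + M / c) :=
    div_le_self (by linarith [(hbf _ (ha.trans hb)).1]) (hbg _ (ha.trans hb)).1
  linarith [(hbf _ (ha.trans hb)).2]


/-- Let `v` be smooth with `v φ > 0` for all `φ ≥ φ₀`, and set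
`𝔳 φ = v' φ / (2 * v φ)`.  If `𝔥₁` and `𝔥₂` are both solutions of the modified Hubble
equation `𝔥' = √(𝔥² - 1) - 𝔳 ⬝ 𝔥` defined on all of `[φ₀, ∞)` and there is a constant `M`
such that `1 ≤ 𝔥ᵢ φ ≤ M` for all `φ ≥ φ₀` and `i = 1, 2`, then `𝔥₁ = 𝔥₂` on `[φ₀, ∞)`:
a bounded global solution of the modified Hubble equation, if it exists, is unique. -/
theorem separatrix_stmt4 (v 𝔥₁ 𝔥₂ : ℝ → ℝ) (φ₀ M : ℝ)
    (hv : ContDiff ℝ (⊤ : ℕ∞) v) (hvpos : ∀ φ, φ₀ ≤ φ → 0 < v φ)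
    (hode₁ : ∀ φ, φ₀ ≤ φ →
      HasDerivWithinAt 𝔥₁
        (Real.sqrt ((𝔥₁ φ) ^ 2 - 1) - (deriv v φ / (2 * v φ)) * 𝔥₁ φ) (Set.Ici φ₀) φ)
    (hode₂ : ∀ φ, φ₀ ≤ φ →
      HasDerivWithinAt 𝔥₂
        (Real.sqrt ((𝔥₂ φ) ^ 2 - 1) - (deriv v φ / (2 * v φ)) * 𝔥₂ φ) (Set.Ici φ₀) φ)
    (hbd₁ : ∀ φ, φ₀ ≤ φ → 1 ≤ 𝔥₁ φ ∧ 𝔥₁ φ ≤ M)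
    (hbd₂ : ∀ φ, φ₀ ≤ φ → 1 ≤ 𝔥₂ φ ∧ 𝔥₂ φ ≤ M) :
    ∀ φ, φ₀ ≤ φ → 𝔥₁ φ = 𝔥₂ φ := by
  intro φ hφ
  have h12 := bounded_solution_le (fun z => deriv v z / (2 * v z)) 𝔥₁ 𝔥₂ φ₀ M
    hode₁ hode₂ hbd₁ hbd₂ φ hφ
  have h21 := bounded_solution_le (fun z => deriv v z / (2 * v z)) 𝔥₂ 𝔥₁ φ₀ M
    hode₂ hode₁ hbd₂ hbd₁ φ hφ
  exact le_antisymm h12 h21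
end

section
/- Let v : ℝ → ℝ be smooth with v(φ) > 0 for all φ ≥ φ₀, set 𝔳(φ) = v'(φ)/(2v(φ)), and let 𝔥ₛ be a solution of the modified Hubble equation 𝔥'(φ) = √(𝔥(φ)² − 1) − 𝔳(φ)·𝔥(φ) defined on [φ₀, ∞) with 1 ≤ 𝔥ₛ(φ) ≤ M := sup_{φ ≥ φ₀} 𝔥ₛ(φ) < ∞. Let 𝔥 be a solution of the same equation with 𝔥(φ₀) > 𝔥ₛ(φ₀), and set Δ = 𝔥(φ₀)/𝔥ₛ(φ₀) > 1 and C = √(1 − 1/(Δ²M²)) − √(1 − 1/M²) > 0. Then 𝔥 is defined on all of [φ₀, ∞) with 𝔥(φ) > 1, and 𝔥(φ)/𝔥ₛ(φ) > Δ·exp(C·(φ − φ₀)) for all φ > φ₀; in particular 𝔥 grows at least exponentially as φ → ∞. -/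
/-!
The quantity to follow is `L = log 𝔥 - log 𝔥ₛ`. The potential term `𝔳` cancels from its derivative,
leaving `L' = √(1 - 1/𝔥²) - √(1 - 1/𝔥ₛ²)`, which is nonnegative as long as `𝔥 ≥ 𝔥ₛ ≥ 1`.

* `𝔥` cannot come down to `𝔥ₛ`: up to a first point where `𝔥 ≤ 𝔥ₛ`, the equation holds for `𝔥`, so
  `L` is monotone there and stays at least `L φ₀ > 0`. Hence `𝔥 > 𝔥ₛ ≥ 1` everywhere, and the
  equation holds on all of `[φ₀, ∞)`.
* Now `L' > 0`, so `𝔥 > Δ 𝔥ₛ` past `φ₀`, and `L' > √(1 - 1/(Δ²𝔥ₛ²)) - √(1 - 1/𝔥ₛ²)`. The right side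
  is decreasing in `𝔥ₛ` (`sqrt_gap_antitone`), hence at least `C`. So `L - C φ` is strictly
  increasing, which is the claimed bound after exponentiating.
-/

open Set

/-- With `k = 1/Δ²` and `u = 1/s²`, the gap `√(1 - k u) - √(1 - u)` increases with `u`: it equals
`(1 - k) u / (√(1 - k u) + √(1 - u))`, whose numerator increases and denominator decreases. -/
lemma sqrt_gap_mono {k u w : ℝ} (hk0 : 0 ≤ k) (hk1 : k < 1) (hw : 0 ≤ w) (hwu : w ≤ u)
    (hu : u ≤ 1) :
    √(1 - k * w) - √(1 - w) ≤ √(1 - k * u) - √(1 - u) := by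
  have hku : k * u ≤ u := by nlinarith
  have hkw : k * w ≤ k * u := mul_le_mul_of_nonneg_left hwu hk0
  have hA := Real.sq_sqrt (show 0 ≤ 1 - k * w by linarith)
  have hB := Real.sq_sqrt (show 0 ≤ 1 - w by linarith)
  have hP := Real.sq_sqrt (show 0 ≤ 1 - k * u by linarith)
  have hQ := Real.sq_sqrt (show 0 ≤ 1 - u by linarith)
  have hAP : √(1 - k * u) ≤ √(1 - k * w) := Real.sqrt_le_sqrt (by linarith)
  have hBQ : √(1 - u) ≤ √(1 - w) := Real.sqrt_le_sqrt (by linarith)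
  have hPQ : √(1 - u) ≤ √(1 - k * u) := Real.sqrt_le_sqrt (by linarith)
  have hQ0 := Real.sqrt_nonneg (1 - u)
  have hAw : 0 < √(1 - k * w) := Real.sqrt_pos.2 (by nlinarith)
  have hB0 := Real.sqrt_nonneg (1 - w)
  generalize √(1 - k * w) = A at *
  generalize √(1 - w) = B at *
  generalize √(1 - k * u) = P at *
  generalize √(1 - u) = Q at *
  have h1 : (A - B) * (A + B) ≤ (P - Q) * (P + Q) := by nlinarith
  have h2 : (P - Q) * (P + Q) ≤ (P - Q) * (A + B) :=
    mul_le_mul_of_nonneg_left (by linarith) (by linarith)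
  exact le_of_mul_le_mul_right (h1.trans h2) (by linarith)

lemma sqrt_gap_antitone {D s M : ℝ} (hD : 1 < D) (hs : 1 ≤ s) (hsM : s ≤ M) :
    √(1 - 1 / (D ^ 2 * M ^ 2)) - √(1 - 1 / M ^ 2) ≤
      √(1 - 1 / (D ^ 2 * s ^ 2)) - √(1 - 1 / s ^ 2) := by
  have h := sqrt_gap_mono (k := 1 / D ^ 2) (w := 1 / M ^ 2) (u := 1 / s ^ 2) (by positivity)
    ((div_lt_one (by positivity)).2 (by nlinarith)) (by positivity)
    (one_div_le_one_div_of_le (by positivity) (by gcongr))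
    ((div_le_one (by positivity)).2 (by nlinarith))
  simpa only [one_div_mul_one_div] using h

lemma sqrt_one_sub_inv_sq_lt {a b : ℝ} (ha : 1 ≤ a) (hab : a < b) :
    √(1 - 1 / a ^ 2) < √(1 - 1 / b ^ 2) := by
  apply Real.sqrt_lt_sqrt
  · have : 1 / a ^ 2 ≤ 1 := (div_le_one (by positivity)).2 (by nlinarith)
    linarith
  · have : 1 / b ^ 2 < 1 / a ^ 2 := one_div_lt_one_div_of_lt (by positivity) (by gcongr)
    linarith

lemma sqrt_sq_sub_one_div_s5 {a : ℝ} (ha : 1 ≤ a) : √(a ^ 2 - 1) / a = √(1 - 1 / a ^ 2) := by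
  have h : 1 - 1 / a ^ 2 = (a ^ 2 - 1) / a ^ 2 := by field_simp
  rw [h, Real.sqrt_div' _ (by positivity), Real.sqrt_sq (by linarith)]

/-- The term `c = 𝔳 φ` of the equation is the same for two solutions, so it drops out of the
derivative of the log-ratio. -/
lemma hasDerivWithinAt_log_sub_log {f g : ℝ → ℝ} {c x : ℝ} {S : Set ℝ}
    (hf : HasDerivWithinAt f (√((f x) ^ 2 - 1) - c * f x) S x)
    (hg : HasDerivWithinAt g (√((g x) ^ 2 - 1) - c * g x) S x)
    (hf1 : 1 ≤ f x) (hg1 : 1 ≤ g x) :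
    HasDerivWithinAt (fun y => Real.log (f y) - Real.log (g y))
      (√(1 - 1 / (f x) ^ 2) - √(1 - 1 / (g x) ^ 2)) S x := by
  have hf0 : f x ≠ 0 := by positivity
  have hg0 : g x ≠ 0 := by positivity
  refine ((hf.log hf0).sub (hg.log hg0)).congr_deriv ?_
  rw [← sqrt_sq_sub_one_div_s5 hf1, ← sqrt_sq_sub_one_div_s5 hg1]
  field_simp
  ring


/-- Let `v` be smooth with `v φ > 0` for `φ ≥ φ₀`, set
`𝔳 φ = v' φ / (2 * v φ)`, and let `𝔥ₛ` be a solution of the modified Hubble equation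
`𝔥' = √(𝔥² - 1) - 𝔳 ⬝ 𝔥` on `[φ₀, ∞)` with `1 ≤ 𝔥ₛ φ ≤ M := sup_{φ ≥ φ₀} 𝔥ₛ φ < ∞`.
Let `𝔥` be a (maximally extended) solution of the same equation with `𝔥 φ₀ > 𝔥ₛ φ₀`
(encoded: `𝔥` is continuous on `[φ₀, ∞)` and satisfies the ODE at each `φ ≥ φ₀` for
which it has stayed `≥ 1` up to `φ`), and set `Δ = 𝔥 φ₀ / 𝔥ₛ φ₀ > 1` and
`C = √(1 - 1/(Δ²M²)) - √(1 - 1/M²) > 0`.  Then `𝔥` is defined on all of `[φ₀, ∞)` with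
`𝔥 φ > 1`, and `𝔥 φ / 𝔥ₛ φ > Δ * exp (C * (φ - φ₀))` for all `φ > φ₀`; in particular
`𝔥` grows at least exponentially as `φ → ∞`. -/
theorem separatrix_stmt5 (v 𝔥ₛ 𝔥 : ℝ → ℝ) (φ₀ : ℝ)
    (hv : ContDiff ℝ (⊤ : ℕ∞) v) (hvpos : ∀ φ, φ₀ ≤ φ → 0 < v φ)
    (hsode : ∀ φ, φ₀ ≤ φ →
      HasDerivWithinAt 𝔥ₛ
        (Real.sqrt ((𝔥ₛ φ) ^ 2 - 1) - (deriv v φ / (2 * v φ)) * 𝔥ₛ φ) (Set.Ici φ₀) φ)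
    (hsge : ∀ φ, φ₀ ≤ φ → 1 ≤ 𝔥ₛ φ)
    (hsbdd : BddAbove (𝔥ₛ '' Set.Ici φ₀))
    (hcont : ContinuousOn 𝔥 (Set.Ici φ₀))
    (hode : ∀ φ, φ₀ ≤ φ → (∀ x ∈ Set.Icc φ₀ φ, 1 ≤ 𝔥 x) →
      HasDerivWithinAt 𝔥
        (Real.sqrt ((𝔥 φ) ^ 2 - 1) - (deriv v φ / (2 * v φ)) * 𝔥 φ) (Set.Ici φ₀) φ)
    (hinit : 𝔥ₛ φ₀ < 𝔥 φ₀) :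
    0 < Real.sqrt (1 - 1 / ((𝔥 φ₀ / 𝔥ₛ φ₀) ^ 2 * (sSup (𝔥ₛ '' Set.Ici φ₀)) ^ 2)) -
        Real.sqrt (1 - 1 / (sSup (𝔥ₛ '' Set.Ici φ₀)) ^ 2) ∧
    (∀ φ, φ₀ ≤ φ → 1 < 𝔥 φ) ∧
    (∀ φ, φ₀ < φ →
      (𝔥 φ₀ / 𝔥ₛ φ₀) *
        Real.exp ((Real.sqrt (1 - 1 / ((𝔥 φ₀ / 𝔥ₛ φ₀) ^ 2 * (sSup (𝔥ₛ '' Set.Ici φ₀)) ^ 2)) -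
          Real.sqrt (1 - 1 / (sSup (𝔥ₛ '' Set.Ici φ₀)) ^ 2)) * (φ - φ₀)) <
      𝔥 φ / 𝔥ₛ φ) := by
  have hs0 := hsge φ₀ le_rfl
  have hLd : ∀ φ, φ₀ ≤ φ → (∀ x ∈ Icc φ₀ φ, 1 ≤ 𝔥 x) →
      HasDerivWithinAt (fun y => Real.log (𝔥 y) - Real.log (𝔥ₛ y))
        (√(1 - 1 / (𝔥 φ) ^ 2) - √(1 - 1 / (𝔥ₛ φ) ^ 2)) (Ici φ₀) φ := fun φ hφ h1 =>
    hasDerivWithinAt_log_sub_log (hode φ hφ h1) (hsode φ hφ) (h1 φ ⟨hφ, le_rfl⟩) (hsge φ hφ)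
  have hscont : ContinuousOn 𝔥ₛ (Ici φ₀) := fun x hx => (hsode x hx).continuousWithinAt
  have hgt : ∀ φ, φ₀ ≤ φ → 𝔥ₛ φ < 𝔥 φ := by
    by_contra! hcon
    obtain ⟨T, hT, hTle⟩ := hcon
    have hsub : Icc φ₀ T ⊆ Ici φ₀ := Icc_subset_Ici_self
    -- The first point `t` at which `𝔥 ≤ 𝔥ₛ`.
    obtain ⟨t, ⟨⟨ht0, htT⟩, htle⟩, htmin⟩ : ∃ t, IsLeast {x ∈ Icc φ₀ T | 𝔥 x ≤ 𝔥ₛ x} t :=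
      IsCompact.exists_isLeast
        (isCompact_Icc.of_isClosed_subset
          (isClosed_Icc.isClosed_le (hcont.mono hsub) (hscont.mono hsub)) (sep_subset _ _))
        ⟨T, ⟨hT, le_rfl⟩, hTle⟩
    have hbefore : ∀ x ∈ Ico φ₀ t, 𝔥ₛ x < 𝔥 x := fun x hx => by
      by_contra! hle
      exact absurd (htmin ⟨⟨hx.1, hx.2.le.trans htT⟩, hle⟩) (not_le.2 hx.2)
    have h0t : φ₀ < t := lt_of_le_of_ne ht0 (by rintro rfl; linarith)
    have hsubt : Icc φ₀ t ⊆ Ici φ₀ := Icc_subset_Ici_self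
    have hge : ∀ x ∈ Icc φ₀ t, 𝔥ₛ x ≤ 𝔥 x := by
      have hcl : Icc φ₀ t ⊆ closure (Ico φ₀ t) := (closure_Ico h0t.ne).ge
      exact fun x hx => le_on_closure (fun y hy => (hbefore y hy).le)
        (hscont.mono (by rw [closure_Ico h0t.ne]; exact hsubt))
        (hcont.mono (by rw [closure_Ico h0t.ne]; exact hsubt)) (hcl hx)
    have hge1 : ∀ x ∈ Icc φ₀ t, 1 ≤ 𝔥 x := fun x hx => (hsge x hx.1).trans (hge x hx)
    have hd : ∀ x ∈ Icc φ₀ t, _ := fun x hx =>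
      hLd x hx.1 fun y hy => hge1 y ⟨hy.1, hy.2.trans hx.2⟩
    have hmono : MonotoneOn (fun y => Real.log (𝔥 y) - Real.log (𝔥ₛ y)) (Icc φ₀ t) := by
      refine monotoneOn_of_hasDerivWithinAt_nonneg (convex_Icc _ _)
        (fun x hx => ((hd x hx).mono hsubt).continuousWithinAt)
        (fun x hx => (hd x (interior_subset hx)).mono (interior_subset.trans hsubt))
        (fun x hx => ?_)
      have hx' := interior_subset hx
      rcases (hge x hx').eq_or_lt with h | h
      · rw [h, sub_self]
      · exact sub_nonneg.2 (sqrt_one_sub_inv_sq_lt (hsge x hx'.1) h).le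
    have hLt := hmono (left_mem_Icc.2 ht0) (right_mem_Icc.2 ht0) ht0
    have h1 := Real.log_lt_log (by linarith) hinit
    have h2 := Real.log_le_log (by linarith [hge1 t ⟨ht0, le_rfl⟩]) htle
    simp only at hLt
    linarith
  have hge1 : ∀ φ, φ₀ ≤ φ → 1 < 𝔥 φ := fun φ hφ => (hsge φ hφ).trans_lt (hgt φ hφ)
  have hd : ∀ x ∈ Ici φ₀, _ := fun x hx => hLd x hx fun y hy => (hge1 y hy.1).le
  have hLmono : StrictMonoOn (fun y => Real.log (𝔥 y) - Real.log (𝔥ₛ y)) (Ici φ₀) :=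
    strictMonoOn_of_hasDerivWithinAt_pos (convex_Ici _)
      (fun x hx => (hd x hx).continuousWithinAt)
      (fun x hx => (hd x (interior_subset hx)).mono interior_subset)
      (fun x hx => sub_pos.2
        (sqrt_one_sub_inv_sq_lt (hsge x (interior_subset hx)) (hgt x (interior_subset hx))))
  set M := sSup (𝔥ₛ '' Ici φ₀)
  set Δ := 𝔥 φ₀ / 𝔥ₛ φ₀ with hΔdef
  have hsM : ∀ φ, φ₀ ≤ φ → 𝔥ₛ φ ≤ M := fun φ hφ => le_csSup hsbdd ⟨φ, hφ, rfl⟩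
  have hΔ : 1 < Δ := (one_lt_div (by linarith)).2 hinit
  have hM : 1 ≤ M := hs0.trans (hsM φ₀ le_rfl)
  have hlogΔ : Real.log (𝔥 φ₀) - Real.log (𝔥ₛ φ₀) = Real.log Δ :=
    (Real.log_div (by linarith [hge1 φ₀ le_rfl]) (by linarith)).symm
  refine ⟨?_, hge1, fun φ hφ => ?_⟩
  · rw [sub_pos, ← mul_pow]
    exact sqrt_one_sub_inv_sq_lt hM (by nlinarith)
  set C := √(1 - 1 / (Δ ^ 2 * M ^ 2)) - √(1 - 1 / M ^ 2)
  have hLC : StrictMonoOn (fun y => Real.log (𝔥 y) - Real.log (𝔥ₛ y) - C * y) (Ici φ₀) := by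
    have hdC : ∀ x ∈ Ici φ₀, HasDerivWithinAt
        (fun y => Real.log (𝔥 y) - Real.log (𝔥ₛ y) - C * y)
        (√(1 - 1 / (𝔥 x) ^ 2) - √(1 - 1 / (𝔥ₛ x) ^ 2) - C * 1) (Ici φ₀) x := fun x hx =>
      (hd x hx).sub ((hasDerivWithinAt_id x _).const_mul C)
    refine strictMonoOn_of_hasDerivWithinAt_pos (convex_Ici _)
      (fun x hx => (hdC x hx).continuousWithinAt)
      (fun x hx => (hdC x (interior_subset hx)).mono interior_subset) (fun x hx => ?_)
    rw [interior_Ici, mem_Ioi] at hx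
    have hsx := hsge x hx.le
    have hhx := hge1 x hx.le
    have h1 : Δ * 𝔥ₛ x < 𝔥 x := by
      have h := hLmono self_mem_Ici hx.le hx
      simp only at h
      rw [hlogΔ, ← Real.log_div (by linarith) (by linarith)] at h
      exact (lt_div_iff₀ (by linarith)).1
        ((Real.log_lt_log_iff (by linarith) (by positivity)).1 h)
    have h2 := sqrt_one_sub_inv_sq_lt (by nlinarith) h1
    rw [mul_pow] at h2
    have h3 : C ≤ _ := sqrt_gap_antitone hΔ hsx (hsM x hx.le)
    linarith
  have h := hLC self_mem_Ici hφ.le hφ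
  have hhφ := hge1 φ hφ.le
  have hsφ := hsge φ hφ.le
  simp only at h
  rw [hlogΔ, ← Real.log_div (by linarith) (by linarith)] at h
  rw [← Real.log_lt_log_iff (by positivity) (by positivity),
    Real.log_mul (by linarith) (Real.exp_pos _).ne', Real.log_exp]
  linarith
end

section
/- Let v : ℝ → ℝ be smooth with v(φ) > 0 for all φ ≥ φ₀, set 𝔳(φ) = v'(φ)/(2v(φ)), and let 𝔥ₛ be a solution of the modified Hubble equation 𝔥'(φ) = √(𝔥(φ)² − 1) − 𝔳(φ)·𝔥(φ) defined on [φ₀, ∞) with 1 ≤ 𝔥ₛ(φ) ≤ M for all φ ≥ φ₀. If 𝔥 is a solution of the same equation with 1 < 𝔥(φ₀) < 𝔥ₛ(φ₀), then 𝔥 cannot remain ≥ 1 on all of [φ₀, ∞): there exists φ₁ > φ₀ such that 𝔥(φ₁) = 1 (i.e., 𝔥 is a type-A solution). -/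
/-!
Suppose `𝔥` never takes the value `1` after `φ₀`. Then `𝔥 > 1` on `[φ₀, ∞)`, so `𝔥` solves the ODE
there. In the ratio `r = 𝔥ₛ / 𝔥` the potential term cancels:
`r' = (√(𝔥ₛ² - 1) 𝔥 - √(𝔥² - 1) 𝔥ₛ) / 𝔥²`.
Multiplying the numerator by its conjugate gives `𝔥ₛ² - 𝔥²`, so wherever `r ≥ r₀ := r φ₀ > 1`
one gets `r' > c` with `c = (r₀² - 1) / (4 M²)` (`ratio_deriv_lower_bound`). Hence `r` cannot cross
the line `r₀ + c (φ - φ₀)` downwards and is unbounded, whereas `r ≤ 𝔥ₛ ≤ M`.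
-/

/-- Lower bound for the derivative of the ratio `s / h` of two solutions (with the common
potential term already cancelled) at a point where that ratio is at least `r`. -/
lemma ratio_deriv_lower_bound {s h r M : ℝ} (hh : 1 ≤ h) (hs : 1 ≤ s) (hsM : s ≤ M) (hr : 1 < r)
    (hrs : r * h ≤ s) :
    (r ^ 2 - 1) / (4 * M ^ 2) <
      (Real.sqrt (s ^ 2 - 1) * h - Real.sqrt (h ^ 2 - 1) * s) / h ^ 2 := by
  have hM : 0 < M := by linarith
  have hr2 : 0 < r ^ 2 - 1 := by nlinarith
  have hhs : h ≤ s := by nlinarith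
  set c := (r ^ 2 - 1) / (4 * M ^ 2) with hc
  have hcpos : 0 < c := by positivity
  have hcM : c * (4 * M ^ 2) = r ^ 2 - 1 := by rw [hc]; field_simp
  have hSq : Real.sqrt (s ^ 2 - 1) ^ 2 = s ^ 2 - 1 := Real.sq_sqrt (by nlinarith)
  have hTq : Real.sqrt (h ^ 2 - 1) ^ 2 = h ^ 2 - 1 := Real.sq_sqrt (by nlinarith)
  have hS0 := Real.sqrt_nonneg (s ^ 2 - 1)
  have hT0 := Real.sqrt_nonneg (h ^ 2 - 1)
  have hS : Real.sqrt (s ^ 2 - 1) ≤ s := Real.sqrt_le_iff.mpr ⟨by linarith, by linarith⟩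
  have hT : Real.sqrt (h ^ 2 - 1) ≤ h := Real.sqrt_le_iff.mpr ⟨by linarith, by linarith⟩
  set S := Real.sqrt (s ^ 2 - 1)
  set T := Real.sqrt (h ^ 2 - 1)
  rw [lt_div_iff₀ (by positivity)]
  by_contra! hcon
  have hdiff : (S * h - T * s) * (S * h + T * s) = s ^ 2 - h ^ 2 := by
    linear_combination h ^ 2 * hSq - s ^ 2 * hTq
  have hsum0 : 0 ≤ S * h + T * s := by positivity
  have hsum : S * h + T * s ≤ 2 * M ^ 2 := by
    have h1 : S * h ≤ M * M := mul_le_mul (by linarith) (by linarith) (by linarith) hM.le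
    have h2 : T * s ≤ M * M := mul_le_mul (by linarith) (by linarith) (by linarith) hM.le
    nlinarith
  have hlow : (r ^ 2 - 1) * h ^ 2 ≤ s ^ 2 - h ^ 2 := by
    have : (r * h) ^ 2 ≤ s ^ 2 := pow_le_pow_left₀ (by positivity) hrs 2
    nlinarith
  have hup : s ^ 2 - h ^ 2 ≤ c * h ^ 2 * (2 * M ^ 2) := by
    rw [← hdiff]
    exact (mul_le_mul_of_nonneg_right hcon hsum0).trans
      (mul_le_mul_of_nonneg_left hsum (by positivity))
  have hpos : 0 < (r ^ 2 - 1) * h ^ 2 := by positivity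
  have heq : c * h ^ 2 * (2 * M ^ 2) = (r ^ 2 - 1) * h ^ 2 / 2 := by rw [← hcM]; ring
  linarith

/-- Let `v` be smooth with `v φ > 0` for `φ ≥ φ₀`, set
`𝔳 φ = v' φ / (2 * v φ)`, and let `𝔥ₛ` be a solution of the modified Hubble equation
`𝔥' = √(𝔥² - 1) - 𝔳 ⬝ 𝔥` defined on `[φ₀, ∞)` with `1 ≤ 𝔥ₛ φ ≤ M` for all `φ ≥ φ₀`.
If `𝔥` is a (maximally extended) solution of the same equation with
`1 < 𝔥 φ₀ < 𝔥ₛ φ₀` (encoded: `𝔥` is continuous on `[φ₀, ∞)` and satisfies the ODE at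
each `φ ≥ φ₀` for which it has stayed `≥ 1` up to `φ`), then `𝔥` cannot remain `≥ 1` on
all of `[φ₀, ∞)`: there exists `φ₁ > φ₀` such that `𝔥 φ₁ = 1` (type-A solution). -/
theorem separatrix_stmt6 (v 𝔥ₛ 𝔥 : ℝ → ℝ) (φ₀ M : ℝ)
    (hv : ContDiff ℝ (⊤ : ℕ∞) v) (hvpos : ∀ φ, φ₀ ≤ φ → 0 < v φ)
    (hsode : ∀ φ, φ₀ ≤ φ →
      HasDerivWithinAt 𝔥ₛ
        (Real.sqrt ((𝔥ₛ φ) ^ 2 - 1) - (deriv v φ / (2 * v φ)) * 𝔥ₛ φ) (Set.Ici φ₀) φ)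
    (hsbd : ∀ φ, φ₀ ≤ φ → 1 ≤ 𝔥ₛ φ ∧ 𝔥ₛ φ ≤ M)
    (hcont : ContinuousOn 𝔥 (Set.Ici φ₀))
    (hode : ∀ φ, φ₀ ≤ φ → (∀ x ∈ Set.Icc φ₀ φ, 1 ≤ 𝔥 x) →
      HasDerivWithinAt 𝔥
        (Real.sqrt ((𝔥 φ) ^ 2 - 1) - (deriv v φ / (2 * v φ)) * 𝔥 φ) (Set.Ici φ₀) φ)
    (hinit1 : 1 < 𝔥 φ₀) (hinit2 : 𝔥 φ₀ < 𝔥ₛ φ₀) :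
    ∃ φ₁, φ₀ < φ₁ ∧ 𝔥 φ₁ = 1 := by
  by_contra! hne
  have hgt : ∀ x, φ₀ ≤ x → 1 < 𝔥 x := by
    intro x hx
    by_contra! hle
    obtain ⟨y, hy, hy1⟩ := intermediate_value_Icc' hx (hcont.mono Set.Icc_subset_Ici_self)
      ⟨hle, hinit1.le⟩
    rcases hy.1.eq_or_lt with h | h
    · rw [← h] at hy1
      linarith
    · exact hne y h hy1
  have hM : 0 < M := by linarith [(hsbd φ₀ le_rfl).1, (hsbd φ₀ le_rfl).2]
  set r₀ := 𝔥ₛ φ₀ / 𝔥 φ₀ with hr₀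
  have hr₀1 : 1 < r₀ := by
    rw [hr₀, one_lt_div (by linarith)]
    exact hinit2
  set c := (r₀ ^ 2 - 1) / (4 * M ^ 2) with hc
  have hcpos : 0 < c := by
    have : 0 < r₀ ^ 2 - 1 := by nlinarith
    positivity
  have hderiv : ∀ x, φ₀ ≤ x → HasDerivWithinAt (fun y => 𝔥ₛ y / 𝔥 y)
      ((Real.sqrt (𝔥ₛ x ^ 2 - 1) * 𝔥 x - Real.sqrt (𝔥 x ^ 2 - 1) * 𝔥ₛ x) / 𝔥 x ^ 2)
      (Set.Ici φ₀) x := by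
    intro x hx
    have h0 : 𝔥 x ≠ 0 := by linarith [hgt x hx]
    refine ((hsode x hx).div (hode x hx fun y hy => (hgt y hy.1).le) h0).congr_deriv ?_
    ring
  have hbound : ∀ b, ∀ x ∈ Set.Icc φ₀ b, r₀ + c * (x - φ₀) ≤ 𝔥ₛ x / 𝔥 x := by
    intro b x hx
    refine image_le_of_deriv_right_lt_deriv_boundary' (f := fun y => r₀ + c * (y - φ₀))
      (f' := fun _ => c) (B := fun y => 𝔥ₛ y / 𝔥 y)
      (by fun_prop) (fun y _ => ?_) (by simp [hr₀])
      (fun y hy => (hderiv y hy.1).continuousWithinAt.mono Set.Icc_subset_Ici_self)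
      (fun y hy => (hderiv y hy.1).mono (Set.Ici_subset_Ici.mpr hy.1)) (fun y hy heq => ?_) hx
    · have := (((hasDerivAt_id y).sub_const φ₀).const_mul c).const_add r₀
      simpa using this.hasDerivWithinAt
    · have hy1 := hgt y hy.1
      refine ratio_deriv_lower_bound hy1.le (hsbd y hy.1).1 (hsbd y hy.1).2 hr₀1 ?_
      rw [← le_div_iff₀ (by linarith), ← heq]
      have : 0 ≤ c * (y - φ₀) := mul_nonneg hcpos.le (by linarith [hy.1])
      linarith
  -- At `φ₀ + M / c` the line has height `r₀ + M`, which exceeds the bound `M` on the ratio.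
  have hx : φ₀ ≤ φ₀ + M / c := by
    have : 0 < M / c := by positivity
    linarith
  have h1 := hbound _ _ ⟨hx, le_rfl⟩
  have h2 : c * (φ₀ + M / c - φ₀) = M := by field_simp; ring
  have h3 : 𝔥ₛ (φ₀ + M / c) / 𝔥 (φ₀ + M / c) ≤ 𝔥ₛ (φ₀ + M / c) :=
    div_le_self (by linarith [(hsbd _ hx).1]) (hgt _ hx).le
  linarith [(hsbd _ hx).2]
end

section
/- Let 0 ≤ α < 1 and let v belong to the class C_α, with φ₀ as in the definition. Let α₀ be any number with α < α₀ < 1 such that 𝔳(φ) < α₀ for all φ ≥ φ₀. Then there exists a solution 𝔥ₛ of the modified Hubble equation 𝔥'(φ) = √(𝔥(φ)² − 1) − 𝔳(φ)·𝔥(φ) defined on all of [φ₀, ∞) and satisfying 1 ≤ 𝔥ₛ(φ) ≤ 1/√(1 − α₀²) for every φ ≥ φ₀. Equivalently, the Hamilton–Jacobi equation h' = √(h² − v) for the potential v has a separatrix solution hₛ = 𝔥ₛ·√v, a global solution with hₛ/√v bounded. -/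
/-!
Write `u = v'/(2v)`, so `0 < u < α₀ < 1` on `[φ₀, ∞)`, and `M = 1/√(1 - α₀²)`.  The right-hand side
`F(t, x) = √(x² - 1) - u(t) x` is negative at `x = 1` and positive at `x = M`, so going backward in
time solutions cannot leave `[1, M]`: for every `N` there is a solution on the left of `N` with
values in `[1, M]` (`backward`).  Since `F` is not Lipschitz in `x` near `1`, this is shown on the
smaller strip `[1/√(1 - k²), M]` with `k` the minimum of `u` on the compact time interval, where
Picard-Lindelöf applies.

Moreover `∂F/∂x ≥ 1 - α₀ > 0` (`expand`), so any two such solutions approach each other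
exponentially backward in time (`contract`).  Hence the backward solutions starting from `N` converge
locally uniformly as `N → ∞`, together with their derivatives, and the limit is a solution with values
in `[1, M]` on all of `[φ₀, ∞)` (`separatrix_aux`).
-/

open Set Filter Topology

/-! ### Barriers and backward contraction -/

/-- Backward barrier: a function that is nondecreasing wherever it exceeds `M` and ends at or below
`M` was never above `M`. -/
lemma barrier {a N M : ℝ} {H H' : ℝ → ℝ} (hc : ContinuousOn H (Icc a N))
    (hd : ∀ t ∈ Ioo a N, HasDerivAt H (H' t) t)
    (hpos : ∀ t ∈ Ioo a N, M < H t → 0 ≤ H' t) (hN : H N ≤ M) :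
    ∀ t ∈ Icc a N, H t ≤ M := by
  intro t ht
  by_contra! hlt
  -- From `t` up to the first later time at which `H ≤ M`, the function `H` is nondecreasing.
  set S : Set ℝ := Icc t N ∩ H ⁻¹' Iic M with hS
  have hc' : ContinuousOn H (Icc t N) := hc.mono (Icc_subset_Icc_left ht.1)
  have hScl : IsClosed S := hc'.preimage_isClosed_of_isClosed isClosed_Icc isClosed_Iic
  have hSne : S.Nonempty := ⟨N, ⟨ht.2, le_rfl⟩, hN⟩
  have hSbd : BddBelow S := ⟨t, fun x hx => hx.1.1⟩
  have hs : sInf S ∈ S := hScl.csInf_mem hSne hSbd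
  set s := sInf S
  have hmono : MonotoneOn H (Icc t s) := by
    apply monotoneOn_of_deriv_nonneg (convex_Icc _ _) (hc'.mono (Icc_subset_Icc_right hs.1.2))
    · intro x hx
      rw [interior_Icc] at hx
      exact (hd x ⟨ht.1.trans_lt hx.1, hx.2.trans_le hs.1.2⟩).differentiableAt.differentiableWithinAt
    · intro x hx
      rw [interior_Icc] at hx
      have hx' : x ∈ Ioo a N := ⟨ht.1.trans_lt hx.1, hx.2.trans_le hs.1.2⟩
      rw [(hd x hx').deriv]
      refine hpos x hx' ?_
      by_contra! hle
      exact absurd (csInf_le hSbd ⟨⟨hx.1.le, hx'.2.le⟩, hle⟩) (not_le.2 hx.2)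
  have := hmono ⟨le_rfl, hs.1.1⟩ ⟨hs.1.1, le_rfl⟩ hs.1.1
  have h2 : H s ≤ M := hs.2
  linarith

lemma expand_aux {x y : ℝ} (hy : 1 ≤ y) (hxy : y ≤ x) :
    x - y ≤ √(x ^ 2 - 1) - √(y ^ 2 - 1) := by
  have hs : √(y ^ 2 - 1) ≤ y := Real.sqrt_le_iff.2 ⟨by linarith, by linarith⟩
  have hsq : √(y ^ 2 - 1) ^ 2 = y ^ 2 - 1 := Real.sq_sqrt (by nlinarith)
  have : √(y ^ 2 - 1) + (x - y) ≤ √(x ^ 2 - 1) := by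
    apply Real.le_sqrt_of_sq_le
    nlinarith
  linarith

/-- The vector field `x ↦ √(x² - 1) - u x` is strongly monotone on `[1, ∞)`, with constant
`1 - α₀` if `u ≤ α₀`, because `√(x² - 1)` has slope at least `1` there. -/
lemma expand {x y u α₀ : ℝ} (hx : 1 ≤ x) (hy : 1 ≤ y) (hu : u ≤ α₀) :
    (1 - α₀) * (x - y) ^ 2 ≤
      (x - y) * ((√(x ^ 2 - 1) - u * x) - (√(y ^ 2 - 1) - u * y)) := by
  have key : (x - y) ^ 2 ≤ (x - y) * (√(x ^ 2 - 1) - √(y ^ 2 - 1)) := by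
    rcases le_total y x with h | h
    · nlinarith [expand_aux hy h]
    · nlinarith [expand_aux hx h]
  nlinarith [sq_nonneg (x - y)]

/-- Two solutions with values in `[1, M]` differ, at time `t`, by at most `M e^{-c(T - t)}` if both
solve the equation up to time `T` and `u ≤ 1 - c`.  For `t ≥ T` the bound is trivial, which spares a
case distinction on `t` later on. -/
lemma contract {a T c M : ℝ} {u H K : ℝ → ℝ} (hc : 0 ≤ c) (hu : ∀ t, u t ≤ 1 - c)
    (hH : ∀ t ∈ Ioc a T, HasDerivAt H (√(H t ^ 2 - 1) - u t * H t) t)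
    (hK : ∀ t ∈ Ioc a T, HasDerivAt K (√(K t ^ 2 - 1) - u t * K t) t)
    (hHb : ∀ t, 1 ≤ H t ∧ H t ≤ M) (hKb : ∀ t, 1 ≤ K t ∧ K t ≤ M)
    {t : ℝ} (ht : a < t) : |H t - K t| ≤ M * Real.exp (-c * (T - t)) := by
  have hM : 1 ≤ M := (hHb t).1.trans (hHb t).2
  have htriv : ∀ t, |H t - K t| ≤ M := fun t => by
    rw [abs_le]; constructor <;> linarith [hHb t, hKb t]
  rcases le_total T t with hTt | htT
  · have : 1 ≤ Real.exp (-c * (T - t)) := Real.one_le_exp (by nlinarith)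
    nlinarith [htriv t]
  -- By strong monotonicity of the field, `((H - K) e^{-cs})²` is nondecreasing in `s`.
  have hder : ∀ s ∈ Icc t T, HasDerivAt (fun s => ((H s - K s) * Real.exp (-c * s)) ^ 2)
      (2 * ((H s - K s) * ((√(H s ^ 2 - 1) - u s * H s) - (√(K s ^ 2 - 1) - u s * K s))
        - c * (H s - K s) ^ 2) * Real.exp (-c * s) ^ 2) s := by
    intro s hs
    have hs' : s ∈ Ioc a T := ⟨ht.trans_le hs.1, hs.2⟩
    have he : HasDerivAt (fun s => Real.exp (-c * s)) (Real.exp (-c * s) * (-c * 1)) s :=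
      ((hasDerivAt_id s).const_mul (-c)).exp
    refine ((((hH s hs').sub (hK s hs')).mul he).pow 2).congr_deriv ?_
    simp only [Pi.sub_apply, Pi.mul_apply]
    push_cast
    ring
  have hmono : MonotoneOn (fun s => ((H s - K s) * Real.exp (-c * s)) ^ 2) (Icc t T) := by
    apply monotoneOn_of_deriv_nonneg (convex_Icc _ _)
      (fun s hs => (hder s hs).continuousAt.continuousWithinAt)
      (fun s hs => (hder s (interior_subset hs)).differentiableAt.differentiableWithinAt)
    intro s hs
    rw [(hder s (interior_subset hs)).deriv]
    have := expand (hHb s).1 (hKb s).1 (hu s)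
    have : 0 ≤ (H s - K s) * ((√(H s ^ 2 - 1) - u s * H s) - (√(K s ^ 2 - 1) - u s * K s))
        - c * (H s - K s) ^ 2 := by linarith
    positivity
  have h1 := hmono ⟨le_rfl, htT⟩ ⟨htT, le_rfl⟩ htT
  have h2 := sq_le_sq.1 h1
  rw [abs_mul, abs_mul, Real.abs_exp, Real.abs_exp] at h2
  have h3 : |H t - K t| * Real.exp (-c * t) ≤ M * Real.exp (-c * T) :=
    h2.trans (by gcongr; exact htriv T)
  have h4 : Real.exp (-c * (T - t)) * Real.exp (-c * t) = Real.exp (-c * T) := by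
    rw [← Real.exp_add]; ring_nf
  rw [← h4, ← mul_assoc] at h3
  exact le_of_mul_le_mul_right h3 (Real.exp_pos _)

/-! ### Backward solutions on bounded intervals -/

/-- The constant `B = 1/√(1 - k²)` is the equilibrium of `x' = √(x² - 1) - k x`. -/
lemma crit {k : ℝ} (hk : 0 < k) (hk1 : k < 1) :
    1 < 1 / √(1 - k ^ 2) ∧ √((1 / √(1 - k ^ 2)) ^ 2 - 1) = k * (1 / √(1 - k ^ 2)) := by
  have hp : 0 < 1 - k ^ 2 := by nlinarith
  have hs : 0 < √(1 - k ^ 2) := Real.sqrt_pos.2 hp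
  constructor
  · rw [lt_div_iff₀ hs, one_mul, Real.sqrt_lt' one_pos]
    nlinarith
  · rw [Real.sqrt_eq_iff_mul_self_eq_of_pos (by positivity)]
    have := Real.sq_sqrt hp.le
    field_simp
    linarith

/-- Away from `1`, namely for `x, y ∈ [b, M]` with `√(b² - 1) = k b > 0`, the function `√(x² - 1)` is
Lipschitz with constant `M / (k b)`. -/
lemma sqrt_lip {b M k x y : ℝ} (hk : 0 < k) (hb : 1 ≤ b) (hbk : √(b ^ 2 - 1) = k * b)
    (hx : b ≤ x) (hxM : x ≤ M) (hy : b ≤ y) (hyM : y ≤ M) :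
    √(x ^ 2 - 1) ≤ √(y ^ 2 - 1) + M / (k * b) * |x - y| := by
  have hkb : 0 < k * b := by positivity
  rcases le_total x y with h | h
  · have h1 : √(x ^ 2 - 1) ≤ √(y ^ 2 - 1) := Real.sqrt_le_sqrt (by nlinarith)
    have : 0 ≤ M / (k * b) * |x - y| := mul_nonneg (div_nonneg (by linarith) hkb.le) (abs_nonneg _)
    linarith
  · rw [abs_of_nonneg (sub_nonneg.2 h)]
    have hK : 0 ≤ M / (k * b) := div_nonneg (by linarith) hkb.le
    have hσ : k * b ≤ √(y ^ 2 - 1) := hbk ▸ Real.sqrt_le_sqrt (by nlinarith)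
    have hsq : √(y ^ 2 - 1) ^ 2 = y ^ 2 - 1 := Real.sq_sqrt (by nlinarith)
    have hM : M ≤ √(y ^ 2 - 1) * (M / (k * b)) := by
      calc M = (k * b) * (M / (k * b)) := by field_simp
        _ ≤ _ := by gcongr
    have hd : 0 ≤ x - y := sub_nonneg.2 h
    apply Real.sqrt_le_iff.2 ⟨by positivity, ?_⟩
    nlinarith [mul_le_mul_of_nonneg_right hM hd, sq_nonneg (M / (k * b) * (x - y)),
      mul_le_mul_of_nonneg_right (show x + y ≤ 2 * M by linarith) hd]

/-- Existence of a solution on `(a, N)` with values in `[1, M]`, where `M = 1/√(1 - α₀²)`: the backward solution starting from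
the value `M` at time `N`. -/
lemma backward {u : ℝ → ℝ} {α₀ a N : ℝ} (hu : Continuous u) (hu0 : ∀ t, 0 < u t)
    (huα : ∀ t, u t ≤ α₀) (hα1 : α₀ < 1) :
    ∃ H : ℝ → ℝ, (∀ t, 1 ≤ H t ∧ H t ≤ 1 / √(1 - α₀ ^ 2)) ∧
      ∀ t ∈ Ioo a N, HasDerivAt H (√(H t ^ 2 - 1) - u t * H t) t := by
  have hα0 : 0 < α₀ := (hu0 0).trans_le (huα 0)
  obtain ⟨hM1, hMα⟩ := crit hα0 hα1
  set M := 1 / √(1 - α₀ ^ 2) with hMdef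
  rcases le_or_gt N a with hNa | haN
  · refine ⟨fun _ => 1, fun _ => ⟨le_rfl, hM1.le⟩, fun t ht => ?_⟩
    exact absurd (ht.1.trans ht.2) (not_lt.2 hNa)
  obtain ⟨t₁, -, ht₁⟩ := isCompact_Icc.exists_isMinOn (nonempty_Icc.2 haN.le) hu.continuousOn
  set k := u t₁
  have hk0 : 0 < k := hu0 _
  have hkα : k ≤ α₀ := huα _
  obtain ⟨hb1, hbk⟩ := crit hk0 (hkα.trans_lt hα1)
  have hbM : 1 / √(1 - k ^ 2) ≤ M := by
    have : 0 < 1 - α₀ ^ 2 := by nlinarith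
    rw [hMdef]
    gcongr
  set b := 1 / √(1 - k ^ 2) with hbdef
  -- `c` truncates to the strip `[b, M]`; the truncated field `G` is bounded and globally Lipschitz.
  set c : ℝ → ℝ := fun x => max b (min M x) with hc
  have hcb : ∀ x, b ≤ c x := fun x => le_max_left _ _
  have hcM : ∀ x, c x ≤ M := fun x => max_le hbM (min_le_left _ _)
  have hcl : ∀ x y, |c x - c y| ≤ |x - y| := fun x y => by
    simp only [hc, max_comm b, min_comm M]
    exact (abs_max_sub_max_le_abs _ _ _).trans (abs_inf_sub_inf_le_abs x y M)
  set G : ℝ → ℝ → ℝ := fun t x => √(c x ^ 2 - 1) - u t * c x with hG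
  have hM0 : 0 < M := by linarith
  have hK0 : 0 ≤ M / (k * b) := by positivity
  have hPL : IsPicardLindelof G (tmin := a) (tmax := N) ⟨N, haN.le, le_rfl⟩ M
      (M * (N - a)).toNNReal 0 M.toNNReal
      (M / (k * b) + 1).toNNReal := by
    refine ⟨fun t _ => ?_, fun x _ => ?_, fun t _ x _ => ?_, ?_⟩
    · apply LipschitzOnWith.of_le_add_mul' _
      intro x _ y _
      have h1 := sqrt_lip hk0 hb1.le hbk (hcb x) (hcM x) (hcb y) (hcM y)
      have h2 := mul_le_mul_of_nonneg_left (hcl x y) hK0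
      have h3 : u t * (c y - c x) ≤ |x - y| := by
        have := huα t
        have := hu0 t
        have h4 := hcl y x
        rw [abs_sub_comm y x] at h4
        have h5 := le_abs_self (c y - c x)
        have h6 := abs_nonneg (c y - c x)
        nlinarith
      rw [Real.dist_eq]
      simp only [hG]
      linarith
    · simp only [hG]
      fun_prop
    · have h1 : √(c x ^ 2 - 1) ≤ M :=
        Real.sqrt_le_iff.2 ⟨hM0.le, by nlinarith [hcb x, hcM x]⟩
      have h2 := Real.sqrt_nonneg (c x ^ 2 - 1)
      have h3 : 0 ≤ u t * c x := mul_nonneg (hu0 t).le (by linarith [hcb x])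
      have h4 : u t * c x ≤ M := by nlinarith [hu0 t, huα t, hcb x, hcM x]
      rw [Real.norm_eq_abs, abs_le, Real.coe_toNNReal _ hM0.le]
      simp only [hG]
      constructor <;> linarith
    · rw [Real.coe_toNNReal _ hM0.le, Real.coe_toNNReal _ (mul_nonneg hM0.le (by linarith))]
      simp [haN.le]
  obtain ⟨H, hHN, hH⟩ := hPL.exists_eq_forall_mem_Icc_hasDerivWithinAt₀
  simp only at hHN
  have hcont : ContinuousOn H (Icc a N) := fun t ht => (hH t ht).continuousWithinAt
  have hder : ∀ t ∈ Ioo a N, HasDerivAt H (G t (H t)) t := fun t ht =>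
    (hH t (Ioo_subset_Icc_self ht)).hasDerivAt (Icc_mem_nhds ht.1 ht.2)
  -- The solution of the truncated equation stays in `[b, M]`, so the truncation is inactive.
  have hup : ∀ t ∈ Icc a N, H t ≤ M := by
    refine barrier hcont hder (fun t _ hlt => ?_) hHN.le
    have : c (H t) = M := by simp [hc, hlt.le, hbM]
    simp only [hG, this, hMα]
    nlinarith [huα t]
  have hlo : ∀ t ∈ Icc a N, -H t ≤ -b := by
    refine barrier hcont.neg (fun t ht => (hder t ht).neg) (fun t ht hlt => ?_) (by
      linarith)
    have : c (H t) = b := max_eq_left ((min_le_right _ _).trans (neg_lt_neg_iff.1 hlt).le)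
    simp only [hG, this, hbk]
    have : k ≤ u t := ht₁ (Ioo_subset_Icc_self ht)
    nlinarith
  have hceq : ∀ t ∈ Ioo a N, c (H t) = H t := fun t ht => by
    have h1 := hup t (Ioo_subset_Icc_self ht)
    have h2 := hlo t (Ioo_subset_Icc_self ht)
    simp only [hc]
    rw [min_eq_right h1, max_eq_right (by linarith)]
  -- Using `c ∘ H` instead of `H` gives the bounds outside `(a, N)` as well.
  refine ⟨fun t => c (H t), fun t => ⟨hb1.le.trans (hcb _), hcM _⟩, fun t ht => ?_⟩
  refine (hder t ht).congr_of_eventuallyEq ?_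
  filter_upwards [Ioo_mem_nhds ht.1 ht.2] with s hs using hceq s hs

/-! ### The limit of the backward solutions -/

/-- `√(x² - 1)` is Hölder of exponent `1/2` on `[1, M]`; this transfers uniform convergence of
solutions to their derivatives although `√(x² - 1)` is not Lipschitz at `1`. -/
lemma sqrt_holder {x y M : ℝ} (hx : 1 ≤ x) (hxM : x ≤ M) (hy : 1 ≤ y) (hyM : y ≤ M) :
    |√(x ^ 2 - 1) - √(y ^ 2 - 1)| ≤ √(2 * M * |x - y|) := by
  wlog h : y ≤ x generalizing x y
  · rw [abs_sub_comm, abs_sub_comm x]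
    exact this hy hyM hx hxM (le_of_not_ge h)
  have hd : 0 ≤ x - y := sub_nonneg.2 h
  have hmono : √(y ^ 2 - 1) ≤ √(x ^ 2 - 1) := Real.sqrt_le_sqrt (by nlinarith)
  have h0 : 0 ≤ 2 * M * (x - y) := mul_nonneg (by linarith) hd
  rw [abs_of_nonneg (sub_nonneg.2 hmono), abs_of_nonneg hd, sub_le_iff_le_add]
  apply Real.sqrt_le_iff.2 ⟨by positivity, ?_⟩
  nlinarith [Real.sq_sqrt h0, Real.sq_sqrt (show 0 ≤ y ^ 2 - 1 by nlinarith),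
    mul_nonneg (Real.sqrt_nonneg (2 * M * (x - y))) (Real.sqrt_nonneg (y ^ 2 - 1))]

/-- Existence of the separatrix on `(a, ∞)` for a coefficient `u` defined on all of `ℝ`, as the limit
of the backward solutions `H n` on `(a, n + 1)`. -/
lemma separatrix_aux {u : ℝ → ℝ} {α₀ : ℝ} (a : ℝ) (hu : Continuous u) (hu0 : ∀ t, 0 < u t)
    (huα : ∀ t, u t ≤ α₀) (hα1 : α₀ < 1) :
    ∃ h : ℝ → ℝ, ∀ t, a < t → HasDerivAt h (√(h t ^ 2 - 1) - u t * h t) t ∧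
      1 ≤ h t ∧ h t ≤ 1 / √(1 - α₀ ^ 2) := by
  have hα0 : 0 < α₀ := (hu0 0).trans_le (huα 0)
  have hM1 := (crit hα0 hα1).1
  choose H hHb hHd using fun n : ℕ => backward (a := a) (N := n + 1) hu hu0 huα hα1
  set M := 1 / √(1 - α₀ ^ 2)
  set c := 1 - α₀ with hc
  have hc0 : 0 < c := by linarith
  have hdiff : ∀ n m : ℕ, n ≤ m → ∀ t, a < t →
      |H n t - H m t| ≤ M * Real.exp (-c * (n - t)) := by
    intro n m hnm t ht
    have hnm' : (n : ℝ) ≤ m := by exact_mod_cast hnm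
    exact contract hc0.le (fun t => by linarith [huα t])
      (fun s hs => hHd n s ⟨hs.1, by linarith [hs.2]⟩)
      (fun s hs => hHd m s ⟨hs.1, by linarith [hs.2]⟩) (hHb n) (hHb m) ht
  have hexp : ∀ t : ℝ, Tendsto (fun n : ℕ => M * Real.exp (-c * (n - t))) atTop (𝓝 0) := by
    intro t
    rw [← mul_zero M]
    refine (Real.tendsto_exp_atBot.comp ?_).const_mul M
    exact (tendsto_atTop_add_const_right _ (-t) tendsto_natCast_atTop_atTop).const_mul_atTop_of_neg
      (neg_lt_zero.2 hc0)
  have hlim : ∀ t, a < t → ∃ l, Tendsto (fun n => H n t) atTop (𝓝 l) := fun t ht =>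
    cauchySeq_tendsto_of_complete
      (cauchySeq_of_le_tendsto_0' _ (fun n m hnm => hdiff n m hnm t ht) (hexp t))
  choose! h hh using hlim
  have hb1 : ∀ t, a < t → 1 ≤ h t := fun t ht => ge_of_tendsto' (hh t ht) fun n => (hHb n t).1
  have hbM : ∀ t, a < t → h t ≤ M := fun t ht => le_of_tendsto' (hh t ht) fun n => (hHb n t).2
  have hrate : ∀ n : ℕ, ∀ t, a < t → |H n t - h t| ≤ M * Real.exp (-c * (n - t)) := by
    intro n t ht
    refine le_of_tendsto ((tendsto_const_nhds.sub (hh t ht)).abs) ?_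
    filter_upwards [eventually_ge_atTop n] with m hm using hdiff n m hm t ht
  refine ⟨h, fun t ht => ⟨?_, hb1 t ht, hbM t ht⟩⟩
  refine hasDerivAt_of_tendstoUniformlyOn (l := atTop) (s := Ioo a (t + 1)) (f := H)
    (f' := fun n s => √(H n s ^ 2 - 1) - u s * H n s)
    (g' := fun s => √(h s ^ 2 - 1) - u s * h s) isOpen_Ioo ?_ ?_ (fun x hx => hh x hx.1)
    ⟨ht, by linarith⟩
  · rw [Metric.tendstoUniformlyOn_iff]
    intro ε hε
    have h0 : Tendsto (fun n : ℕ => √(2 * M * (M * Real.exp (-c * (n - (t + 1)))))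
        + M * Real.exp (-c * (n - (t + 1)))) atTop (𝓝 0) := by
      have := (((hexp (t + 1)).const_mul (2 * M)).sqrt).add (hexp (t + 1))
      simpa using this
    filter_upwards [h0.eventually (gt_mem_nhds hε)] with n hn s hs
    refine lt_of_le_of_lt ?_ hn
    have he : |H n s - h s| ≤ M * Real.exp (-c * (n - (t + 1))) := by
      refine (hrate n s hs.1).trans ?_
      have := hs.2
      gcongr ?_ * Real.exp ?_
      nlinarith
    have h1 := sqrt_holder (hHb n s).1 (hHb n s).2 (hb1 s hs.1) (hbM s hs.1)
    have h2 : √(2 * M * |H n s - h s|) ≤ √(2 * M * (M * Real.exp (-c * (n - (t + 1))))) := by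
      gcongr
    have h3 : |u s * (H n s - h s)| ≤ |H n s - h s| := by
      rw [abs_mul, abs_of_pos (hu0 s)]
      exact mul_le_of_le_one_left (abs_nonneg _) ((huα s).trans hα1.le)
    rw [dist_comm, Real.dist_eq]
    calc _ = |(√(H n s ^ 2 - 1) - √(h s ^ 2 - 1)) - u s * (H n s - h s)| := by ring_nf
      _ ≤ _ := (abs_sub _ _).trans (by linarith)
  · obtain ⟨n₀, hn₀⟩ := exists_nat_ge t
    filter_upwards [eventually_ge_atTop n₀] with n hn x hx
    have : (n₀ : ℝ) ≤ n := by exact_mod_cast hn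
    exact hHd n x ⟨hx.1, by linarith [hx.2]⟩

/-- Let `0 ≤ α < 1` and let `v` belong to the class `C_α` with `φ₀` as in
the definition: `v φ > 0` and `v' φ > 0` for all `φ ≥ φ₀`, `𝔳 φ := v' φ / (2 * v φ) < 1`
for all `φ > φ₀`, and `𝔳 φ → α` as `φ → ∞`.  Let `α₀` be any number with `α < α₀ < 1`
such that `𝔳 φ < α₀` for all `φ ≥ φ₀`.  Then there exists a solution `𝔥ₛ` of the
modified Hubble equation `𝔥' = √(𝔥² - 1) - 𝔳 ⬝ 𝔥` defined on all of `[φ₀, ∞)` and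
satisfying `1 ≤ 𝔥ₛ φ ≤ 1/√(1 - α₀²)` for every `φ ≥ φ₀` (a separatrix). -/
theorem separatrix_stmt7 (v : ℝ → ℝ) (α α₀ φ₀ : ℝ)
    (hα0 : 0 ≤ α) (hα1 : α < 1)
    (hv : ContDiff ℝ (⊤ : ℕ∞) v)
    (hvpos : ∀ φ, φ₀ ≤ φ → 0 < v φ)
    (hv'pos : ∀ φ, φ₀ ≤ φ → 0 < deriv v φ)
    (hfrak1 : ∀ φ, φ₀ < φ → deriv v φ / (2 * v φ) < 1)
    (hlim : Filter.Tendsto (fun φ => deriv v φ / (2 * v φ)) Filter.atTop (nhds α))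
    (hαα₀ : α < α₀) (hα₀1 : α₀ < 1)
    (hfrakα₀ : ∀ φ, φ₀ ≤ φ → deriv v φ / (2 * v φ) < α₀) :
    ∃ 𝔥ₛ : ℝ → ℝ,
      (∀ φ, φ₀ ≤ φ →
        HasDerivWithinAt 𝔥ₛ
          (Real.sqrt ((𝔥ₛ φ) ^ 2 - 1) - (deriv v φ / (2 * v φ)) * 𝔥ₛ φ) (Set.Ici φ₀) φ) ∧
      (∀ φ, φ₀ ≤ φ → 1 ≤ 𝔥ₛ φ ∧ 𝔥ₛ φ ≤ 1 / Real.sqrt (1 - α₀ ^ 2)) := by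
  -- Freezing `v'/(2v)` to the left of `φ₀` makes the one-sided derivative at `φ₀` two-sided.
  have hcont : Continuous fun t => deriv v (max φ₀ t) / (2 * v (max φ₀ t)) := by
    have hv' : Continuous (deriv v) := hv.continuous_deriv (by simp)
    have hvc : Continuous v := hv.continuous
    refine (hv'.comp (by fun_prop)).div (by fun_prop) fun t => ?_
    exact (mul_pos two_pos (hvpos _ (le_max_left _ _))).ne'
  obtain ⟨h, hh⟩ := separatrix_aux (φ₀ - 1) hcont
    (fun t => div_pos (hv'pos _ (le_max_left _ _))
      (mul_pos two_pos (hvpos _ (le_max_left _ _))))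
    (fun t => (hfrakα₀ _ (le_max_left _ _)).le) hα₀1
  refine ⟨h, fun φ hφ => ?_, fun φ hφ => (hh φ (by linarith)).2⟩
  have := (hh φ (by linarith)).1
  rw [max_eq_right hφ] at this
  exact this.hasDerivWithinAt
end

section
/- Let v : ℝ → ℝ be smooth with v(φ) > 0 for all φ ≥ φ₀, set 𝔳(φ) = v'(φ)/(2v(φ)), and suppose there is α₀ with 0 < α₀ < 1 such that 𝔳(φ) < α₀ for all φ ≥ φ₀. If 𝔥 is a solution of the modified Hubble equation 𝔥'(φ) = √(𝔥(φ)² − 1) − 𝔳(φ)·𝔥(φ) on an interval [φ₀, b) with 𝔥(φ₀) ≥ 1/√(1 − α₀²), then 𝔥(φ) ≥ 1/√(1 − α₀²) for every φ in [φ₀, b); in particular such a solution never reaches the boundary 𝔥 = 1 (it is a type-B solution). (The region above the line 𝔥 = 1/√(1 − α₀²) is forward-invariant because solutions of the equation with 𝔳 are super-solutions of the equation with constant coefficient α₀, whose 0-isocline is 𝔥 = 1/√(1 − α₀²).) -/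
/-!
Put `C = 1 / √(1 - α₀²)`. Then `√(C² - 1) = α₀ * C`, so wherever `𝔥 = C` the equation gives
`𝔥' = (α₀ - 𝔳) * C > 0` (`hubble_rhs_pos_of_isocline`). A function that starts at or above
the constant `C` and has strictly positive right derivative at each contact with it cannot
drop below it: this is Mathlib's fencing theorem
`image_le_of_deriv_right_lt_deriv_boundary'`, applied to the constant `C` below `𝔥` on each
compact interval `[φ₀, φ]`.
-/

/-- At the 0-isocline height `1 / √(1 - α²)` of the constant-coefficient equation, the
right-hand side with any coefficient `w < α` is strictly positive. -/
lemma hubble_rhs_pos_of_isocline {α w : ℝ} (hα0 : 0 < α) (hα1 : α < 1) (hw : w < α) :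
    0 < Real.sqrt ((1 / Real.sqrt (1 - α ^ 2)) ^ 2 - 1) - w * (1 / Real.sqrt (1 - α ^ 2)) := by
  have hpos : 0 < 1 - α ^ 2 := by nlinarith
  have hC : 0 < 1 / Real.sqrt (1 - α ^ 2) := by positivity
  have hsq : (1 / Real.sqrt (1 - α ^ 2)) ^ 2 = 1 / (1 - α ^ 2) := by
    rw [div_pow, Real.sq_sqrt hpos.le, one_pow]
  have hrad : (1 / Real.sqrt (1 - α ^ 2)) ^ 2 - 1 = (α * (1 / Real.sqrt (1 - α ^ 2))) ^ 2 := by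
    rw [mul_pow, hsq]
    field_simp
    ring
  rw [hrad, Real.sqrt_sq (by positivity)]
  linarith [mul_lt_mul_of_pos_right hw hC]

/-- Let `v` be smooth with `v φ > 0` for all `φ ≥ φ₀`, set
`𝔳 φ = v' φ / (2 * v φ)`, and suppose there is `α₀` with `0 < α₀ < 1` such that
`𝔳 φ < α₀` for all `φ ≥ φ₀`.  If `𝔥` is a solution of the modified Hubble equation
`𝔥' = √(𝔥² - 1) - 𝔳 ⬝ 𝔥` on an interval `[φ₀, b)` with `𝔥 φ₀ ≥ 1/√(1 - α₀²)`, then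
`𝔥 φ ≥ 1/√(1 - α₀²)` for every `φ ∈ [φ₀, b)`; in particular such a solution never
reaches the boundary `𝔥 = 1` (it is a type-B solution). -/
theorem separatrix_stmt8 (v 𝔥 : ℝ → ℝ) (φ₀ b α₀ : ℝ)
    (hv : ContDiff ℝ (⊤ : ℕ∞) v) (hvpos : ∀ φ, φ₀ ≤ φ → 0 < v φ)
    (hα₀0 : 0 < α₀) (hα₀1 : α₀ < 1)
    (hfrak : ∀ φ, φ₀ ≤ φ → deriv v φ / (2 * v φ) < α₀)
    (hode : ∀ φ ∈ Set.Ico φ₀ b,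
      HasDerivWithinAt 𝔥
        (Real.sqrt ((𝔥 φ) ^ 2 - 1) - (deriv v φ / (2 * v φ)) * 𝔥 φ) (Set.Ico φ₀ b) φ)
    (hinit : 1 / Real.sqrt (1 - α₀ ^ 2) ≤ 𝔥 φ₀) :
    ∀ φ ∈ Set.Ico φ₀ b, 1 / Real.sqrt (1 - α₀ ^ 2) ≤ 𝔥 φ := by
  intro φ hφ
  have hsub : Set.Icc φ₀ φ ⊆ Set.Ico φ₀ b := fun x hx => ⟨hx.1, hx.2.trans_lt hφ.2⟩
  refine image_le_of_deriv_right_lt_deriv_boundary'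
    (f := fun _ => 1 / Real.sqrt (1 - α₀ ^ 2)) (f' := fun _ => 0)
    (B' := fun x => Real.sqrt ((𝔥 x) ^ 2 - 1) - (deriv v x / (2 * v x)) * 𝔥 x)
    continuousOn_const (fun x _ => hasDerivWithinAt_const x _ _) hinit
    (fun x hx => ((hode x (hsub hx)).continuousWithinAt).mono hsub)
    (fun x hx => ?_) (fun x hx heq => ?_) (Set.right_mem_Icc.2 hφ.1)
  · have hxb : x < b := hx.2.trans hφ.2
    -- Near `x`, the sets `Ici x` and `Ico x b` agree.
    exact ((hode x ⟨hx.1, hxb⟩).mono (Set.Ico_subset_Ico_left hx.1)).mono_of_mem_nhdsWithin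
      (Ico_mem_nhdsGE hxb)
  · rw [← heq]
    exact hubble_rhs_pos_of_isocline hα₀0 hα₀1 (hfrak x hx.1)
end

section
/- Let v : ℝ → ℝ be smooth with v(φ) > 0 for all φ ≥ φ₀, and suppose v grows faster than e^{2φ} as φ → ∞, i.e., v(φ)·e^{−2φ} → ∞ as φ → ∞. Then there is no solution h of the Hamilton–Jacobi equation h'(φ) = √(h(φ)² − v(φ)) defined on all of [φ₀, ∞) with h(φ) ≥ √(v(φ)) for every φ ≥ φ₀: every solution reaches the boundary h = √v at a finite value of φ (all solutions are type A, and there is no separatrix). -/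
/-!
Since `v > 0`, any global solution satisfies `h' = √(h² - v) ≤ h`, so `h φ * exp (-φ)` is
nonincreasing on `[φ₀, ∞)`. As `v ≤ h²`, the quantity `v φ * exp (-2φ)` is then bounded above by
`(h φ₀ * exp (-φ₀))²`, which contradicts its divergence to `∞`.
-/


/-- Let `v` be smooth with `v φ > 0` for all `φ ≥ φ₀`, and suppose `v`
grows faster than `exp (2φ)` as `φ → ∞`, i.e. `v φ * exp (-2φ) → ∞`.  Then there is no
solution `h` of the Hamilton–Jacobi equation `h' = √(h² - v)` defined on all of
`[φ₀, ∞)` with `h φ ≥ √(v φ)` for every `φ ≥ φ₀`: every solution reaches the boundary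
`h = √v` at a finite value of `φ` (all solutions are type A and there is no
separatrix). -/
theorem separatrix_stmt9 (v : ℝ → ℝ) (φ₀ : ℝ)
    (hv : ContDiff ℝ (⊤ : ℕ∞) v) (hvpos : ∀ φ, φ₀ ≤ φ → 0 < v φ)
    (hgrow : Filter.Tendsto (fun φ => v φ * Real.exp (-2 * φ)) Filter.atTop Filter.atTop) :
    ¬ ∃ h : ℝ → ℝ,
      (∀ φ, φ₀ ≤ φ →
        HasDerivWithinAt h (Real.sqrt ((h φ) ^ 2 - v φ)) (Set.Ici φ₀) φ) ∧
      (∀ φ, φ₀ ≤ φ → Real.sqrt (v φ) ≤ h φ) := by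
  rintro ⟨h, hder, hge⟩
  have hnonneg : ∀ φ, φ₀ ≤ φ → 0 ≤ h φ := fun φ hφ => (Real.sqrt_nonneg _).trans (hge φ hφ)
  have hg : ∀ φ, φ₀ ≤ φ → HasDerivWithinAt (fun x => h x * Real.exp (-x))
      (Real.sqrt ((h φ) ^ 2 - v φ) * Real.exp (-φ) + h φ * (Real.exp (-φ) * -1))
      (Set.Ici φ₀) φ := fun φ hφ =>
    (hder φ hφ).mul (((hasDerivAt_id φ).neg.exp).hasDerivWithinAt)
  have hanti : AntitoneOn (fun x => h x * Real.exp (-x)) (Set.Ici φ₀) := by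
    refine antitoneOn_of_hasDerivWithinAt_nonpos (convex_Ici φ₀)
      (fun x hx => (hg x hx).continuousWithinAt)
      (fun x hx => (hg x (interior_subset hx)).mono interior_subset) fun x hx => ?_
    have hx' : φ₀ ≤ x := interior_subset hx
    have hle : Real.sqrt ((h x) ^ 2 - v x) ≤ h x :=
      Real.sqrt_le_iff.mpr ⟨hnonneg x hx', by linarith [hvpos x hx']⟩
    nlinarith [Real.exp_pos (-x)]
  obtain ⟨φ, hφ, hbig⟩ := ((Filter.eventually_ge_atTop φ₀).and
    (hgrow.eventually_gt_atTop ((h φ₀ * Real.exp (-φ₀)) ^ 2))).exists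
  have hmono : h φ * Real.exp (-φ) ≤ h φ₀ * Real.exp (-φ₀) :=
    hanti (Set.self_mem_Ici) hφ hφ
  have hvle : v φ ≤ (h φ) ^ 2 := (Real.sqrt_le_left (hnonneg φ hφ)).mp (hge φ hφ)
  have hexp : Real.exp (-2 * φ) = Real.exp (-φ) ^ 2 := by
    rw [← Real.exp_nat_mul]; congr 1; push_cast; ring
  refine absurd hbig (not_lt.mpr ?_)
  calc v φ * Real.exp (-2 * φ) ≤ (h φ) ^ 2 * Real.exp (-φ) ^ 2 := by
        rw [hexp]; gcongr
    _ = (h φ * Real.exp (-φ)) ^ 2 := by ring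
    _ ≤ (h φ₀ * Real.exp (-φ₀)) ^ 2 :=
        pow_le_pow_left₀ (mul_nonneg (hnonneg φ hφ) (Real.exp_pos _).le) hmono 2
end

section
/- Consider the autonomous ODE 𝔥'(φ) = √(𝔥(φ)² − 1) − 𝔥(φ) (the modified Hubble equation for the potential v(φ) = e^{2φ}, for which 𝔳 ≡ 1). If 𝔥 is a solution on an interval [φ₀, b) with 𝔥(φ) ≥ 1 for all φ in [φ₀, b) and 𝔥(φ₀) = 𝔥₀, then 𝔥(φ) ≤ √(𝔥₀² − (φ − φ₀)) for all φ in [φ₀, b). Consequently there is no solution 𝔥 with 𝔥(φ) ≥ 1 defined on all of [φ₀, ∞): every solution reaches the value 1 at some finite φ ≤ φ₀ + 𝔥₀² − 1, and the model v(φ) = e^{2φ} has no separatrix. -/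
/-!
The function `𝔥² + φ` is nonincreasing along any solution with `𝔥 ≥ 1`. With
`s = √(𝔥² - 1)`, so that `s² = 𝔥² - 1`, its derivative is
`2 𝔥 (s - 𝔥) + 1 = 2 𝔥 s - 𝔥² - s² = -(𝔥 - s)² ≤ 0`.
Hence `𝔥(φ)² ≤ 𝔥(φ₀)² - (φ - φ₀)`, which is the asserted bound; for a solution on `[φ₀, ∞)`
the right side vanishes at `φ = φ₀ + 𝔥(φ₀)²`, contradicting `𝔥 ≥ 1`.
-/

lemma antitoneOn_sq_add_id {f : ℝ → ℝ} {D : Set ℝ} (hD : Convex ℝ D)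
    (hode : ∀ x ∈ D, HasDerivWithinAt f (Real.sqrt ((f x) ^ 2 - 1) - f x) D x)
    (hge : ∀ x ∈ D, 1 ≤ f x) :
    AntitoneOn (fun x => f x ^ 2 + x) D := by
  have hd : ∀ x ∈ D, HasDerivWithinAt (fun x => f x ^ 2 + x)
      (2 * f x * (Real.sqrt ((f x) ^ 2 - 1) - f x) + 1) D x := by
    intro x hx
    have h := ((hode x hx).pow 2).add (hasDerivWithinAt_id x D)
    refine h.congr_deriv ?_
    simp
  refine antitoneOn_of_hasDerivWithinAt_nonpos hD (fun x hx => (hd x hx).continuousWithinAt)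
    (fun x hx => (hd x (interior_subset hx)).mono interior_subset) ?_
  intro x hx
  have h1 := hge x (interior_subset hx)
  have hs : Real.sqrt (f x ^ 2 - 1) ^ 2 = f x ^ 2 - 1 := Real.sq_sqrt (by nlinarith)
  nlinarith [sq_nonneg (f x - Real.sqrt (f x ^ 2 - 1))]


/-- Consider the autonomous ODE `𝔥' = √(𝔥² - 1) - 𝔥` (the modified
Hubble equation for the potential `v φ = exp (2φ)`, for which `𝔳 ≡ 1`).  If `𝔥` is a
solution on an interval `[φ₀, b)` with `𝔥 φ ≥ 1` on `[φ₀, b)` and `𝔥 φ₀ = 𝔥₀`, then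
`𝔥 φ ≤ √(𝔥₀² - (φ - φ₀))` on `[φ₀, b)`.  Consequently there is no solution `𝔤` with
`𝔤 φ ≥ 1` defined on all of `[φ₀, ∞)`: every solution reaches the value `1` at some
finite `φ ≤ φ₀ + 𝔥₀² - 1`, and the model `v φ = exp (2φ)` has no separatrix. -/
theorem separatrix_stmt10 (𝔥 : ℝ → ℝ) (φ₀ b 𝔥₀ : ℝ)
    (hode : ∀ φ ∈ Set.Ico φ₀ b,
      HasDerivWithinAt 𝔥 (Real.sqrt ((𝔥 φ) ^ 2 - 1) - 𝔥 φ) (Set.Ico φ₀ b) φ)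
    (hge : ∀ φ ∈ Set.Ico φ₀ b, 1 ≤ 𝔥 φ)
    (hinit : 𝔥 φ₀ = 𝔥₀) :
    (∀ φ ∈ Set.Ico φ₀ b, 𝔥 φ ≤ Real.sqrt (𝔥₀ ^ 2 - (φ - φ₀))) ∧
    (∀ 𝔤 : ℝ → ℝ,
      (∀ φ, φ₀ ≤ φ →
        HasDerivWithinAt 𝔤 (Real.sqrt ((𝔤 φ) ^ 2 - 1) - 𝔤 φ) (Set.Ici φ₀) φ) →
      ¬ (∀ φ, φ₀ ≤ φ → 1 ≤ 𝔤 φ)) := by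
  refine ⟨fun φ hφ => ?_, fun 𝔤 h𝔤 h1 => ?_⟩
  · have h0 : φ₀ ∈ Set.Ico φ₀ b := ⟨le_rfl, hφ.1.trans_lt hφ.2⟩
    have h := antitoneOn_sq_add_id (convex_Ico φ₀ b) hode hge h0 hφ hφ.1
    simp only [hinit] at h
    exact Real.le_sqrt_of_sq_le (by linarith)
  · have hle : φ₀ ≤ φ₀ + 𝔤 φ₀ ^ 2 := by linarith [sq_nonneg (𝔤 φ₀)]
    have h : 𝔤 (φ₀ + 𝔤 φ₀ ^ 2) ^ 2 + (φ₀ + 𝔤 φ₀ ^ 2) ≤ 𝔤 φ₀ ^ 2 + φ₀ :=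
      antitoneOn_sq_add_id (convex_Ici φ₀) h𝔤 h1 Set.self_mem_Ici hle hle
    nlinarith [h1 _ hle]
end

section
/- Let 0 ≤ α < 1 and let v belong to the class C_α, with φ₀ as in the definition. Let 𝔥ₛ be a solution of the modified Hubble equation 𝔥'(φ) = √(𝔥(φ)² − 1) − 𝔳(φ)·𝔥(φ) defined on [φ₀, ∞) with 1 ≤ 𝔥ₛ(φ) ≤ M for all φ ≥ φ₀ (a bounded global solution, i.e., the separatrix). Then lim_{φ→∞} 𝔥ₛ(φ) = 1/√(1 − α²); equivalently, the separatrix hₛ = 𝔥ₛ·√v of the Hamilton–Jacobi equation satisfies hₛ(φ) ~ √(v(φ))/√(1 − α²) as φ → ∞. -/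
/-!
Put `h* = 1/√(1 - α²)`. The ratio `√(x² - 1)/x` is increasing in `x ≥ 1` and equals `α` at `h*`.
Hence, if `c > h*`, then for `φ` large the right-hand side of the modified Hubble equation is bounded
below by a positive constant on `{x ≥ c}`; a solution that reaches `c` at a late time stays above
`c` and grows at least linearly, against `𝔥ₛ ≤ M`. Symmetrically, if `1 ≤ c < h*`, a solution that
falls to `c` at a late time decreases at least linearly, against `1 ≤ 𝔥ₛ`. Both escape arguments are
the single lemma `lt_of_escape`, applied to `𝔥ₛ` and to `-𝔥ₛ`; the monotonicity of the ratio is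
`ratio_le` and `le_ratio`. So `𝔥ₛ` is eventually in every neighbourhood of `h*`.
-/

/-- A function bounded above whose derivative is at least `δ > 0` whenever its value is at least
`c` never reaches the value `c`: otherwise it would dominate a line of slope `δ / 2` from then on. -/
lemma lt_of_escape (g g' : ℝ → ℝ) (T c δ B : ℝ) (hδ : 0 < δ)
    (hg : ∀ t, T ≤ t → HasDerivWithinAt g (g' t) (Set.Ici T) t)
    (hB : ∀ t, T ≤ t → g t ≤ B)
    (hgrow : ∀ t, T ≤ t → c ≤ g t → δ ≤ g' t) :
    ∀ t, T ≤ t → g t < c := by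
  intro t₀ ht₀
  by_contra! hc
  have hline : ∀ b, t₀ ≤ b → c + δ / 2 * (b - t₀) ≤ g b := by
    intro b hb
    refine image_le_of_deriv_right_lt_deriv_boundary' (f := fun t => c + δ / 2 * (t - t₀))
      (f' := fun _ => δ / 2) (a := t₀) (b := b) (B := g) (B' := g') ?_ ?_ ?_ ?_ ?_ ?_
      (Set.right_mem_Icc.2 hb)
    · fun_prop
    · intro x _
      have h := (((hasDerivAt_id x).sub_const t₀).const_mul (δ / 2)).const_add c
      simpa using h.hasDerivWithinAt
    · simpa using hc
    · intro x hx
      exact ((hg x (ht₀.trans hx.1)).continuousWithinAt).mono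
        fun y hy => ht₀.trans hy.1
    · intro x hx
      exact (hg x (ht₀.trans hx.1)).mono fun y hy => (ht₀.trans hx.1).trans hy
    · intro x hx hxe
      have h0 : 0 ≤ δ / 2 * (x - t₀) := mul_nonneg (by linarith) (by linarith [hx.1])
      have := hgrow x (ht₀.trans hx.1) (by linarith)
      linarith
  have hBc : c ≤ B := hc.trans (hB t₀ ht₀)
  -- The time at which the line of slope `δ / 2` through `(t₀, c)` has reached the height `B + 1`.
  have hs : 0 ≤ 2 * (B - c + 1) / δ := div_nonneg (by linarith) hδ.le
  have h1 := hline (t₀ + 2 * (B - c + 1) / δ) (by linarith)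
  have h2 := hB (t₀ + 2 * (B - c + 1) / δ) (by linarith)
  have h3 : δ / 2 * (t₀ + 2 * (B - c + 1) / δ - t₀) = B - c + 1 := by
    field_simp
    ring
  linarith

lemma ratio_le {c x : ℝ} (hc : 1 ≤ c) (hx : c ≤ x) :
    √(1 - 1 / c ^ 2) * x ≤ √(x ^ 2 - 1) := by
  have hc2 : 1 / c ^ 2 ≤ 1 := by
    rw [div_le_one (by positivity)]; nlinarith
  apply Real.le_sqrt_of_sq_le
  rw [mul_pow, Real.sq_sqrt (by linarith)]
  have : 1 ≤ 1 / c ^ 2 * x ^ 2 := by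
    rw [one_div_mul_eq_div, one_le_div (by positivity)]
    gcongr
  linarith

lemma le_ratio {c x : ℝ} (hx1 : 1 ≤ x) (hx : x ≤ c) :
    √(x ^ 2 - 1) ≤ √(1 - 1 / c ^ 2) * x := by
  have hc : 1 ≤ c := hx1.trans hx
  have hc2 : 1 / c ^ 2 ≤ 1 := by
    rw [div_le_one (by positivity)]; nlinarith
  rw [Real.sqrt_le_left (by positivity), mul_pow, Real.sq_sqrt (by linarith)]
  have : 1 / c ^ 2 * x ^ 2 ≤ 1 := by
    rw [one_div_mul_eq_div, div_le_one (by positivity)]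
    gcongr
  linarith

/-- Let `0 ≤ α < 1` and let `v` belong to the class `C_α` with `φ₀` as
in the definition: `v φ > 0` and `v' φ > 0` for all `φ ≥ φ₀`,
`𝔳 φ := v' φ / (2 * v φ) < 1` for all `φ > φ₀`, and `𝔳 φ → α` as `φ → ∞`.  Let `𝔥ₛ` be
a solution of the modified Hubble equation `𝔥' = √(𝔥² - 1) - 𝔳 ⬝ 𝔥` defined on
`[φ₀, ∞)` with `1 ≤ 𝔥ₛ φ ≤ M` for all `φ ≥ φ₀` (the bounded global solution, i.e. the
separatrix).  Then `𝔥ₛ φ → 1/√(1 - α²)` as `φ → ∞`; equivalently, the separatrix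
`hₛ = 𝔥ₛ ⬝ √v` of the Hamilton–Jacobi equation satisfies `hₛ ~ √v / √(1 - α²)`. -/
theorem separatrix_stmt11 (v 𝔥ₛ : ℝ → ℝ) (α φ₀ M : ℝ)
    (hα0 : 0 ≤ α) (hα1 : α < 1)
    (hv : ContDiff ℝ (⊤ : ℕ∞) v)
    (hvpos : ∀ φ, φ₀ ≤ φ → 0 < v φ)
    (hv'pos : ∀ φ, φ₀ ≤ φ → 0 < deriv v φ)
    (hfrak1 : ∀ φ, φ₀ < φ → deriv v φ / (2 * v φ) < 1)
    (hlim : Filter.Tendsto (fun φ => deriv v φ / (2 * v φ)) Filter.atTop (nhds α))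
    (hsode : ∀ φ, φ₀ ≤ φ →
      HasDerivWithinAt 𝔥ₛ
        (Real.sqrt ((𝔥ₛ φ) ^ 2 - 1) - (deriv v φ / (2 * v φ)) * 𝔥ₛ φ) (Set.Ici φ₀) φ)
    (hsbd : ∀ φ, φ₀ ≤ φ → 1 ≤ 𝔥ₛ φ ∧ 𝔥ₛ φ ≤ M) :
    Filter.Tendsto 𝔥ₛ Filter.atTop (nhds (1 / Real.sqrt (1 - α ^ 2))) := by
  have hα2 : 0 < 1 - α ^ 2 := by nlinarith
  have hsq : (1 / √(1 - α ^ 2)) ^ 2 = 1 / (1 - α ^ 2) := by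
    rw [div_pow, Real.sq_sqrt hα2.le, one_pow]
  have hstar1 : 1 ≤ 1 / √(1 - α ^ 2) := by
    rw [one_le_div (Real.sqrt_pos.2 hα2), Real.sqrt_le_iff]
    exact ⟨zero_le_one, by nlinarith⟩
  have hstar0 : 0 < 1 / √(1 - α ^ 2) := by linarith
  rw [tendsto_order]
  constructor
  · intro c hc
    -- For `c < 1` the claim is contained in the bound `1 ≤ 𝔥ₛ`.
    rcases lt_or_ge c 1 with hc1 | hc1
    · filter_upwards [Filter.eventually_ge_atTop φ₀] with φ hφ
      linarith [(hsbd φ hφ).1]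
    have hβ : √(1 - 1 / c ^ 2) < α := by
      have h1 : c ^ 2 < 1 / (1 - α ^ 2) := by rw [← hsq]; gcongr
      have h2 : 1 - α ^ 2 < 1 / c ^ 2 := by
        rw [lt_div_iff₀ hα2] at h1
        rw [lt_div_iff₀ (by positivity)]
        linarith
      have hα : 0 < α := by
        refine hα0.lt_of_ne ?_
        rintro rfl
        norm_num at hc
        linarith
      rw [Real.sqrt_lt' hα]
      linarith
    set β := √(1 - 1 / c ^ 2)
    have hmid : ∀ᶠ φ in Filter.atTop, (α + β) / 2 < deriv v φ / (2 * v φ) :=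
      hlim.eventually_const_lt (by linarith)
    obtain ⟨T₀, hT₀⟩ := Filter.eventually_atTop.1 hmid
    have hφ : ∀ t, max T₀ φ₀ ≤ t → φ₀ ≤ t := fun t ht => (le_max_right _ _).trans ht
    have key := lt_of_escape (fun t => -𝔥ₛ t) _ (max T₀ φ₀) (-c) ((α - β) / 2) (-1)
      (by linarith)
      (fun t ht => ((hsode t (hφ t ht)).mono fun y hy => hφ y hy).neg)
      (fun t ht => by linarith [(hsbd t (hφ t ht)).1])
      (fun t ht hct => by
        have hx1 := (hsbd t (hφ t ht)).1
        have hv1 := hT₀ t ((le_max_left _ _).trans ht)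
        have hr := le_ratio hx1 (neg_le_neg_iff.1 hct)
        have h2 := mul_le_mul_of_nonneg_right hv1.le (by linarith : (0:ℝ) ≤ 𝔥ₛ t)
        have h3 := mul_le_mul_of_nonneg_left hx1 (by linarith : (0:ℝ) ≤ (α - β) / 2)
        change √(𝔥ₛ t ^ 2 - 1) ≤ β * 𝔥ₛ t at hr
        linarith)
    filter_upwards [Filter.eventually_ge_atTop (max T₀ φ₀)] with t ht
    exact neg_lt_neg_iff.1 (key t ht)
  · intro c hc
    have hc1 : 1 ≤ c := hstar1.trans hc.le
    have hβ : α < √(1 - 1 / c ^ 2) := by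
      have h1 : 1 / (1 - α ^ 2) < c ^ 2 := by rw [← hsq]; gcongr
      have h2 : 1 / c ^ 2 < 1 - α ^ 2 := by
        rw [div_lt_iff₀ hα2] at h1
        rw [div_lt_iff₀ (by positivity)]
        linarith
      rw [Real.lt_sqrt hα0]
      linarith
    set β := √(1 - 1 / c ^ 2)
    have hmid : ∀ᶠ φ in Filter.atTop, deriv v φ / (2 * v φ) < (α + β) / 2 :=
      hlim.eventually_lt_const (by linarith)
    obtain ⟨T₀, hT₀⟩ := Filter.eventually_atTop.1 hmid
    have hφ : ∀ t, max T₀ φ₀ ≤ t → φ₀ ≤ t := fun t ht => (le_max_right _ _).trans ht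
    have key := lt_of_escape 𝔥ₛ _ (max T₀ φ₀) c ((β - α) / 2) M
      (by linarith)
      (fun t ht => (hsode t (hφ t ht)).mono fun y hy => hφ y hy)
      (fun t ht => (hsbd t (hφ t ht)).2)
      (fun t ht hct => by
        have hx1 := (hsbd t (hφ t ht)).1
        have hv1 := hT₀ t ((le_max_left _ _).trans ht)
        have hr := ratio_le hc1 hct
        have h2 := mul_le_mul_of_nonneg_right hv1.le (by linarith : (0:ℝ) ≤ 𝔥ₛ t)
        have h3 := mul_le_mul_of_nonneg_left hx1 (by linarith : (0:ℝ) ≤ (β - α) / 2)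
        change β * 𝔥ₛ t ≤ √(𝔥ₛ t ^ 2 - 1) at hr
        linarith)
    filter_upwards [Filter.eventually_ge_atTop (max T₀ φ₀)] with t ht
    exact key t ht
end

section
/- Let 0 ≤ α < 1/√3 and let v belong to the class C_α, with φ₀ as in the definition. Let 𝔥ₛ be a solution of the modified Hubble equation 𝔥'(φ) = √(𝔥(φ)² − 1) − 𝔳(φ)·𝔥(φ) defined on [φ₀, ∞) with 1 ≤ 𝔥ₛ(φ) ≤ M for all φ ≥ φ₀, and let hₛ = 𝔥ₛ·√v be the corresponding separatrix of the Hamilton–Jacobi equation. Then there exists φ₁ ≥ φ₀ such that hₛ(φ) < √(3·v(φ)/2) for all φ ≥ φ₁; that is, the separatrix satisfies the inflation condition as φ → ∞ (backwards inflation). -/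
/-!
Write `𝔳 = v' / (2v)`. The inflation condition `𝔥ₛ √v < √(3v/2)` is `𝔥ₛ < √(3/2)`.
For `h ≥ √(3/2)` one has `√(h² - 1) ≥ h / √3`, so once `𝔳 < β < 1/√3` the
right-hand side of the modified Hubble equation is at least `1/√3 - β > 0`. A solution
that reaches the level `√(3/2)` at such a late time therefore stays above it and grows
at least linearly (`linear_growth`), which contradicts the bound `𝔥ₛ ≤ M`.
-/

/-- At the critical level `h² = 3/2` this is an equality, which is where the threshold
`α < 1/√3` comes from. -/
lemma div_sqrt_three_le_sqrt {h : ℝ} (hh : √(3 / 2) ≤ h) :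
    1 / √3 * h ≤ √(h ^ 2 - 1) := by
  apply Real.le_sqrt_of_sq_le
  have h1 : 3 / 2 ≤ h ^ 2 := (Real.sqrt_le_left ((Real.sqrt_nonneg _).trans hh)).mp hh
  rw [mul_pow, div_pow, Real.sq_sqrt (by norm_num)]
  linarith

/-- A function that starts at or above the level `w`, and whose derivative exceeds `c ≥ 0`
whenever its value is at least `w`, stays above the line of slope `c` through `(a, w)`. -/
lemma linear_growth {g g' : ℝ → ℝ} {a w c : ℝ} (hc : 0 ≤ c) (ha : w ≤ g a)
    (hg : ∀ x, a ≤ x → HasDerivWithinAt g (g' x) (Set.Ici a) x)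
    (hg' : ∀ x, a ≤ x → w ≤ g x → c < g' x) {b : ℝ} (hab : a ≤ b) :
    w + c * (b - a) ≤ g b := by
  refine image_le_of_deriv_right_lt_deriv_boundary' (f := fun x => w + c * (x - a))
    (f' := fun _ => c) (B' := g') (a := a) (b := b) (by fun_prop) (fun x _ => ?_)
    (by simpa using ha) (fun x hx => ?_) (fun x hx => ?_) (fun x hx hEq => ?_) ⟨hab, le_rfl⟩
  · simpa using ((((hasDerivAt_id x).sub_const a).const_mul c).const_add w).hasDerivWithinAt
  · exact (hg x hx.1).continuousWithinAt.mono Set.Icc_subset_Ici_self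
  · exact (hg x hx.1).mono (Set.Ici_subset_Ici.mpr hx.1)
  · refine hg' x hx.1 (hEq ▸ ?_)
    have := mul_nonneg hc (sub_nonneg.mpr hx.1)
    linarith


/-- Let `0 ≤ α < 1/√3` and let `v` belong to the class `C_α` with `φ₀`
as in the definition.  Let `𝔥ₛ` be a solution of the modified Hubble equation
`𝔥' = √(𝔥² - 1) - 𝔳 ⬝ 𝔥` defined on `[φ₀, ∞)` with `1 ≤ 𝔥ₛ φ ≤ M` for all `φ ≥ φ₀`, and
let `hₛ = 𝔥ₛ ⬝ √v` be the corresponding separatrix of the Hamilton–Jacobi equation.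
Then there exists `φ₁ ≥ φ₀` such that `hₛ φ < √(3 * v φ / 2)` for all `φ ≥ φ₁`: the
separatrix satisfies the inflation condition as `φ → ∞` (backwards inflation). -/
theorem separatrix_stmt12 (v 𝔥ₛ : ℝ → ℝ) (α φ₀ M : ℝ)
    (hα0 : 0 ≤ α) (hα1 : α < 1 / Real.sqrt 3)
    (hv : ContDiff ℝ (⊤ : ℕ∞) v)
    (hvpos : ∀ φ, φ₀ ≤ φ → 0 < v φ)
    (hv'pos : ∀ φ, φ₀ ≤ φ → 0 < deriv v φ)
    (hfrak1 : ∀ φ, φ₀ < φ → deriv v φ / (2 * v φ) < 1)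
    (hlim : Filter.Tendsto (fun φ => deriv v φ / (2 * v φ)) Filter.atTop (nhds α))
    (hsode : ∀ φ, φ₀ ≤ φ →
      HasDerivWithinAt 𝔥ₛ
        (Real.sqrt ((𝔥ₛ φ) ^ 2 - 1) - (deriv v φ / (2 * v φ)) * 𝔥ₛ φ) (Set.Ici φ₀) φ)
    (hsbd : ∀ φ, φ₀ ≤ φ → 1 ≤ 𝔥ₛ φ ∧ 𝔥ₛ φ ≤ M) :
    ∃ φ₁, φ₀ ≤ φ₁ ∧ ∀ φ, φ₁ ≤ φ →
      𝔥ₛ φ * Real.sqrt (v φ) < Real.sqrt (3 * v φ / 2) := by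
  obtain ⟨β, hαβ, hβ⟩ := exists_between hα1
  obtain ⟨N, hN⟩ := Filter.eventually_atTop.mp (hlim.eventually (gt_mem_nhds hαβ))
  refine ⟨max φ₀ N, le_max_left _ _, fun φ hφ => ?_⟩
  have hφ₀ : φ₀ ≤ φ := (le_max_left _ _).trans hφ
  have hφN : N ≤ φ := (le_max_right _ _).trans hφ
  have hvφ := hvpos φ hφ₀
  have key : 𝔥ₛ φ < √(3 / 2) := by
    by_contra! hge
    -- Half of the gap, so that the derivative is strictly larger than the slope `c`.
    obtain ⟨c, hcdef⟩ : ∃ c, c = (1 / √3 - β) / 2 := ⟨_, rfl⟩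
    have hc : 0 < c := by linarith
    have hslope : ∀ x, φ ≤ x → √(3 / 2) ≤ 𝔥ₛ x →
        c < √((𝔥ₛ x) ^ 2 - 1) - (deriv v x / (2 * v x)) * 𝔥ₛ x := by
      intro x hx hw
      have h1 := (hsbd x (hφ₀.trans hx)).1
      have h2 := div_sqrt_three_le_sqrt hw
      have h3 := hN x (hφN.trans hx)
      have h4 : deriv v x / (2 * v x) * 𝔥ₛ x ≤ β * 𝔥ₛ x :=
        mul_le_mul_of_nonneg_right h3.le (by linarith)
      have h5 : (1 / √3 - β) * 1 ≤ (1 / √3 - β) * 𝔥ₛ x :=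
        mul_le_mul_of_nonneg_left h1 (by linarith)
      linarith
    have hM : 0 ≤ M := by linarith [hsbd φ hφ₀]
    have hb : φ ≤ φ + M / c := le_add_of_nonneg_right (by positivity)
    have hgrow := linear_growth hc.le hge
      (fun x hx => (hsode x (hφ₀.trans hx)).mono (Set.Ici_subset_Ici.mpr hφ₀)) hslope hb
    have hle := (hsbd _ (hφ₀.trans hb)).2
    have hcM : c * (φ + M / c - φ) = M := by field_simp; ring
    have hpos : 0 < √(3 / 2 : ℝ) := by positivity
    linarith
  rw [show 3 * v φ / 2 = 3 / 2 * v φ by ring, Real.sqrt_mul (by norm_num)]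
  exact mul_lt_mul_of_pos_right key (Real.sqrt_pos.mpr hvφ)
end

section
/- Fix 0 < α < 1 and consider the constant-coefficient modified Hubble equation 𝔥'(φ) = √(𝔥(φ)² − 1) − α·𝔥(φ) (corresponding to the exponential potential v(φ) = (1 − α²)e^{2αφ}, for which 𝔳 ≡ α). The constant function 𝔥(φ) = 1/√(1 − α²) is a solution, and it is the unique solution defined on all of [φ₀, ∞) satisfying 1 ≤ 𝔥(φ) ≤ M for all φ ≥ φ₀ for some constant M. Equivalently, h(φ) = e^{αφ} is the separatrix of the Hamilton–Jacobi equation h' = √(h² − (1 − α²)e^{2αφ}). -/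
/-!
Write `H = 1/√(1 - α²)`, so that `√(H² - 1) = αH` and `H` is an equilibrium. On `[1, ∞)` the map
`h ↦ √(h² - 1) - h` is increasing, hence the equilibrium is repelling with rate at least `1 - α`:
`(h - H)(√(h² - 1) - αh) ≥ (1 - α)(h - H)²` (`repelling`). Along a solution, the quantity
`(𝔥 - H)² exp (-2(1 - α)φ)` is therefore nondecreasing. If `𝔥` is bounded this quantity also tends
to `0` at infinity, so it vanishes identically (`eq_zero_of_bounded_of_growth`), and `𝔥 = H`.
-/

theorem sqrt_equilibrium {α : ℝ} (hα0 : 0 < α) (hα1 : α < 1) :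
    Real.sqrt ((1 / Real.sqrt (1 - α ^ 2)) ^ 2 - 1) = α * (1 / Real.sqrt (1 - α ^ 2)) := by
  have hpos : 0 < 1 - α ^ 2 := by nlinarith
  have hs : 0 < Real.sqrt (1 - α ^ 2) := Real.sqrt_pos.2 hpos
  have hsq : Real.sqrt (1 - α ^ 2) ^ 2 = 1 - α ^ 2 := Real.sq_sqrt hpos.le
  have h : (1 / Real.sqrt (1 - α ^ 2)) ^ 2 - 1 = (α * (1 / Real.sqrt (1 - α ^ 2))) ^ 2 := by
    field_simp
    rw [hsq]
    ring
  rw [h]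
  exact Real.sqrt_sq (by positivity)

/-- Any equilibrium `H ≥ 1` of `h ↦ √(h² - 1) - αh` with `αH > 0` is repelling on `[1, ∞)`, with rate at least
`1 - α`. -/
theorem repelling {α H h : ℝ} (hH : 1 ≤ H) (hS : Real.sqrt (H ^ 2 - 1) = α * H)
    (hS0 : 0 < α * H) (hh : 1 ≤ h) :
    (1 - α) * (h - H) ^ 2 ≤ (h - H) * (Real.sqrt (h ^ 2 - 1) - α * h) := by
  have hSsq : (α * H) ^ 2 = H ^ 2 - 1 := by
    rw [← hS]; exact Real.sq_sqrt (by nlinarith)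
  have hSH : α * H ≤ H := abs_le_of_sq_le_sq' (by linarith) (by linarith) |>.2
  have hsq : Real.sqrt (h ^ 2 - 1) ^ 2 = h ^ 2 - 1 := Real.sq_sqrt (by nlinarith)
  have hs0 := Real.sqrt_nonneg (h ^ 2 - 1)
  generalize Real.sqrt (h ^ 2 - 1) = s at hsq hs0 ⊢
  have hsh : s ≤ h := abs_le_of_sq_le_sq' (by linarith) (by linarith) |>.2
  -- Both sides of `s² - (αH)² = h² - H²` factor; the sum on the right is the larger one.
  have hfac : (s - α * H) * (s + α * H) = (h - H) * (h + H) := by linarith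
  have key : (h - H) ^ 2 ≤ (h - H) * (s - α * H) := by
    refine le_of_mul_le_mul_right ?_ (show 0 < s + α * H by linarith)
    calc (h - H) ^ 2 * (s + α * H) ≤ (h - H) ^ 2 * (h + H) := by gcongr
      _ = (h - H) * (s - α * H) * (s + α * H) := by rw [mul_assoc, hfac]; ring
  linarith

/-- A nonnegative function on a half-line whose logarithmic growth rate is at least `c > 0` cannot
be bounded unless it vanishes. -/
theorem eq_zero_of_bounded_of_growth {u u' : ℝ → ℝ} {a c K : ℝ} (hc : 0 < c)
    (hu : ∀ x, a ≤ x → HasDerivWithinAt u (u' x) (Set.Ici a) x)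
    (hgrow : ∀ x, a ≤ x → c * u x ≤ u' x)
    (h0 : ∀ x, a ≤ x → 0 ≤ u x) (hK : ∀ x, a ≤ x → u x ≤ K) (x : ℝ) (hx : a ≤ x) :
    u x = 0 := by
  have hd : ∀ y, a ≤ y → HasDerivWithinAt (fun y => u y * Real.exp (-c * y))
      (u' y * Real.exp (-c * y) + u y * (Real.exp (-c * y) * (-c))) (Set.Ici a) y := fun y hy => by
    have he : HasDerivAt (fun y : ℝ => Real.exp (-c * y)) (Real.exp (-c * y) * (-c)) y := by
      simpa using ((hasDerivAt_id y).const_mul (-c)).exp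
    exact (hu y hy).mul he.hasDerivWithinAt
  have hmono : MonotoneOn (fun y => u y * Real.exp (-c * y)) (Set.Ici a) := by
    refine monotoneOn_of_hasDerivWithinAt_nonneg (convex_Ici a)
      (fun y hy => (hd y hy).continuousWithinAt)
      (fun y hy => (hd y (interior_subset hy)).mono interior_subset) fun y hy => ?_
    have := hgrow y (interior_subset hy)
    have h2 : 0 ≤ (u' y - c * u y) * Real.exp (-c * y) :=
      mul_nonneg (by linarith) (Real.exp_pos _).le
    linarith
  have hlim : Filter.Tendsto (fun y : ℝ => K * Real.exp (-c * y)) Filter.atTop (nhds 0) := by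
    have : Filter.Tendsto (fun y : ℝ => -c * y) Filter.atTop Filter.atBot :=
      Filter.tendsto_id.const_mul_atTop_of_neg (by linarith)
    simpa using (Real.tendsto_exp_atBot.comp this).const_mul K
  have hle : u x * Real.exp (-c * x) ≤ 0 := by
    refine ge_of_tendsto hlim ?_
    filter_upwards [Filter.eventually_ge_atTop x] with y hy
    exact (hmono hx (hx.trans hy) hy).trans
      (mul_le_mul_of_nonneg_right (hK y (hx.trans hy)) (Real.exp_pos _).le)
  exact le_antisymm (nonpos_of_mul_nonpos_left hle (Real.exp_pos _)) (h0 x hx)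

/-- Fix `0 < α < 1` and consider the constant-coefficient modified
Hubble equation `𝔥' = √(𝔥² - 1) - α ⬝ 𝔥` (corresponding to the exponential potential
`v φ = (1 - α²) exp (2αφ)`, for which `𝔳 ≡ α`).  The constant function
`𝔥 = 1/√(1 - α²)` is a solution, and it is the unique solution defined on all of
`[φ₀, ∞)` satisfying `1 ≤ 𝔥 φ ≤ M` for all `φ ≥ φ₀` for some constant `M`.
Equivalently, `h φ = exp (αφ)` is the separatrix of the Hamilton–Jacobi equation
`h' = √(h² - (1 - α²) exp (2αφ))`. -/
theorem separatrix_stmt13 (α φ₀ : ℝ) (hα0 : 0 < α) (hα1 : α < 1) :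
    (∀ φ : ℝ, HasDerivAt (fun _ : ℝ => 1 / Real.sqrt (1 - α ^ 2))
      (Real.sqrt ((1 / Real.sqrt (1 - α ^ 2)) ^ 2 - 1) -
        α * (1 / Real.sqrt (1 - α ^ 2))) φ) ∧
    (∀ (𝔥 : ℝ → ℝ) (M : ℝ),
      (∀ φ, φ₀ ≤ φ →
        HasDerivWithinAt 𝔥 (Real.sqrt ((𝔥 φ) ^ 2 - 1) - α * 𝔥 φ) (Set.Ici φ₀) φ) →
      (∀ φ, φ₀ ≤ φ → 1 ≤ 𝔥 φ ∧ 𝔥 φ ≤ M) →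
      ∀ φ, φ₀ ≤ φ → 𝔥 φ = 1 / Real.sqrt (1 - α ^ 2)) ∧
    (∀ φ : ℝ, HasDerivAt (fun x : ℝ => Real.exp (α * x))
      (Real.sqrt ((Real.exp (α * φ)) ^ 2 - (1 - α ^ 2) * Real.exp (2 * α * φ))) φ) := by
  have hS := sqrt_equilibrium hα0 hα1
  refine ⟨fun φ => ?_, fun 𝔥 M hd hb φ hφ => ?_, fun φ => ?_⟩
  · rw [hS, sub_self]
    exact hasDerivAt_const _ _
  · have hpos : 0 < 1 - α ^ 2 := by nlinarith
    have hH : 1 ≤ 1 / Real.sqrt (1 - α ^ 2) := by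
      rw [le_div_iff₀ (Real.sqrt_pos.2 hpos), one_mul, Real.sqrt_le_one]
      nlinarith
    generalize 1 / Real.sqrt (1 - α ^ 2) = H at hS hH ⊢
    have h0 : (𝔥 φ - H) ^ 2 = 0 := by
      refine eq_zero_of_bounded_of_growth (u := fun x => (𝔥 x - H) ^ 2) (a := φ₀)
        (c := 2 * (1 - α)) (K := (M + H) ^ 2)
        (u' := fun x => 2 * ((𝔥 x - H) * (Real.sqrt (𝔥 x ^ 2 - 1) - α * 𝔥 x)))
        (by linarith) (fun x hx => ?_) (fun x hx => ?_) (fun x _ => sq_nonneg _)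
        (fun x hx => ?_) φ hφ
      · exact (((hd x hx).sub_const H).pow 2).congr_deriv (by simp; ring)
      · have := repelling hH hS (mul_pos hα0 (by linarith)) (hb x hx).1
        linarith
      · obtain ⟨h1, h2⟩ := hb x hx
        exact sq_le_sq' (by linarith) (by linarith)
    exact sub_eq_zero.1 (pow_eq_zero_iff two_ne_zero |>.1 h0)
  · have hE : Real.exp (2 * α * φ) = Real.exp (α * φ) ^ 2 := by
      rw [← Real.exp_nat_mul]; congr 1; push_cast; ring
    have hs : Real.sqrt (Real.exp (α * φ) ^ 2 - (1 - α ^ 2) * Real.exp (2 * α * φ))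
        = Real.exp (α * φ) * α := by
      rw [hE, show Real.exp (α * φ) ^ 2 - (1 - α ^ 2) * Real.exp (α * φ) ^ 2
        = (Real.exp (α * φ) * α) ^ 2 by ring]
      exact Real.sqrt_sq (by positivity)
    rw [hs]
    simpa using ((hasDerivAt_id φ).const_mul α).exp
end

section
/- For the Higgs potential v(φ) = (φ² − 1)², the function h(φ) = φ² + 1 satisfies the Hamilton–Jacobi equation h'(φ) = √(h(φ)² − v(φ)) for all φ ≥ 0, satisfies h(φ) > √(v(φ)) for all φ > 1, and for any φ₀ > 1 the modified Hubble parameter 𝔥(φ) = h(φ)/√(v(φ)) = (φ² + 1)/(φ² − 1) is bounded on [φ₀, ∞) with lim_{φ→∞} 𝔥(φ) = 1. Hence h(φ) = φ² + 1 is the separatrix of the Higgs model on [φ₀, ∞). -/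
/-!
The Hamilton–Jacobi equation reduces to `(φ² + 1)² - (φ² - 1)² = (2φ)²`. For `φ > 1` the
root `√((φ² - 1)²)` is `φ² - 1`, so the modified Hubble parameter is
`(φ² + 1)/(φ² - 1) = 1 + 2/(φ² - 1)`, which decreases to `1`; its value at `φ₀` bounds it
on `[φ₀, ∞)`.
-/

theorem sqrt_higgs_of_one_lt {φ : ℝ} (h : 1 < φ) :
    Real.sqrt ((φ ^ 2 - 1) ^ 2) = φ ^ 2 - 1 :=
  Real.sqrt_sq (by nlinarith)


/-- For the Higgs potential `v φ = (φ² - 1)²`, the function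
`h φ = φ² + 1` satisfies the Hamilton–Jacobi equation `h' = √(h² - v)` for all
`φ ≥ 0`, satisfies `h φ > √(v φ)` for all `φ > 1`, and for any `φ₀ > 1` the modified
Hubble parameter `𝔥 φ = h φ / √(v φ) = (φ² + 1)/(φ² - 1)` is bounded on `[φ₀, ∞)` with
`𝔥 φ → 1` as `φ → ∞`.  Hence `h φ = φ² + 1` is the separatrix of the Higgs model on
`[φ₀, ∞)`. -/
theorem separatrix_stmt14 :
    (∀ φ : ℝ, 0 ≤ φ → HasDerivAt (fun x : ℝ => x ^ 2 + 1)
      (Real.sqrt ((φ ^ 2 + 1) ^ 2 - (φ ^ 2 - 1) ^ 2)) φ) ∧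
    (∀ φ : ℝ, 1 < φ → Real.sqrt ((φ ^ 2 - 1) ^ 2) < φ ^ 2 + 1) ∧
    (∀ φ : ℝ, 1 < φ →
      (φ ^ 2 + 1) / Real.sqrt ((φ ^ 2 - 1) ^ 2) = (φ ^ 2 + 1) / (φ ^ 2 - 1)) ∧
    (∀ φ₀ : ℝ, 1 < φ₀ → ∃ M : ℝ, ∀ φ, φ₀ ≤ φ →
      (φ ^ 2 + 1) / Real.sqrt ((φ ^ 2 - 1) ^ 2) ≤ M) ∧
    Filter.Tendsto (fun φ : ℝ => (φ ^ 2 + 1) / Real.sqrt ((φ ^ 2 - 1) ^ 2))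
      Filter.atTop (nhds 1) := by
  refine ⟨fun φ h => ?_, fun φ h => ?_, fun φ h => ?_, fun φ₀ h₀ => ?_, ?_⟩
  · have e : Real.sqrt ((φ ^ 2 + 1) ^ 2 - (φ ^ 2 - 1) ^ 2) = 2 * φ := by
      rw [show (φ ^ 2 + 1) ^ 2 - (φ ^ 2 - 1) ^ 2 = (2 * φ) ^ 2 by ring]
      exact Real.sqrt_sq (by positivity)
    rw [e]
    simpa using (hasDerivAt_pow 2 φ).add_const 1
  · rw [sqrt_higgs_of_one_lt h]
    linarith
  · rw [sqrt_higgs_of_one_lt h]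
  · refine ⟨(φ₀ ^ 2 + 1) / (φ₀ ^ 2 - 1), fun φ h => ?_⟩
    rw [sqrt_higgs_of_one_lt (h₀.trans_le h)]
    have h1 : 0 < φ₀ ^ 2 - 1 := by nlinarith
    have h2 : φ₀ ^ 2 ≤ φ ^ 2 := by nlinarith
    rw [div_le_div_iff₀ (by linarith) h1]
    nlinarith
  · have ht : Filter.Tendsto (fun φ : ℝ => φ ^ 2 - 1) Filter.atTop Filter.atTop :=
      Filter.tendsto_atTop_add_const_right _ (-1) (Filter.tendsto_pow_atTop two_ne_zero)
    have hlim : Filter.Tendsto (fun φ : ℝ => 1 + 2 / (φ ^ 2 - 1)) Filter.atTop (nhds 1) := by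
      simpa using (ht.const_div_atTop 2).const_add 1
    refine hlim.congr' ?_
    filter_upwards [Filter.eventually_gt_atTop 1] with φ h
    rw [sqrt_higgs_of_one_lt h]
    have h1 : φ ^ 2 - 1 ≠ 0 := by nlinarith
    field_simp
    ring
end

section
/- For the potential v(φ) = ((2φ − 1)/φ⁴)·e^{2φ}, the function h(φ) = e^{φ}/φ satisfies the Hamilton–Jacobi equation h'(φ) = √(h(φ)² − v(φ)) for all φ ≥ 1, with h(φ) > √(v(φ)) for φ > 1; moreover the corresponding modified Hubble parameter 𝔥(φ) = h(φ)/√(v(φ)) = φ/√(2φ − 1) is unbounded as φ → ∞, with 𝔥(φ)/√(φ/2) → 1 as φ → ∞. (This exhibits a potential outside the class C_α whose separatrix is unbounded in the 𝔥 variable.) -/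
/-!
Everything reduces to closed forms. Since `h² - v = (exp φ * (φ - 1) / φ²)²`, the square root in
the Hamilton–Jacobi equation is `exp φ * (φ - 1) / φ²` for `φ ≥ 1`, which is the derivative of
`exp φ / φ` (`sqrt_h_sq_sub_v`). Similarly `√v = exp φ * √(2φ - 1) / φ²` (`sqrt_v`), so
`h / √v = φ / √(2φ - 1)` (`hubble_eq`), and dividing this by `√(φ/2)` leaves
`√(1 + 1/(2φ - 1))` (`ratio_eq`), which tends to `1`. The modified Hubble parameter is thus a
function tending to `1` times `√(φ/2)`, hence tends to infinity.
-/

lemma sqrt_v {φ : ℝ} (hφ : 1 ≤ φ) :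
    Real.sqrt ((2 * φ - 1) / φ ^ 4 * Real.exp (2 * φ)) =
      Real.exp φ / φ ^ 2 * Real.sqrt (2 * φ - 1) := by
  have h0 : 0 < φ := by linarith
  have h : (2 * φ - 1) / φ ^ 4 * Real.exp (2 * φ) =
      (Real.exp φ / φ ^ 2) ^ 2 * (2 * φ - 1) := by
    rw [two_mul φ, Real.exp_add]
    field_simp
  rw [h, Real.sqrt_mul (sq_nonneg _), Real.sqrt_sq (by positivity)]

lemma sqrt_h_sq_sub_v {φ : ℝ} (hφ : 1 ≤ φ) :
    Real.sqrt ((Real.exp φ / φ) ^ 2 - (2 * φ - 1) / φ ^ 4 * Real.exp (2 * φ)) =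
      Real.exp φ * (φ - 1) / φ ^ 2 := by
  have h0 : 0 < φ := by linarith
  have h1 : 0 ≤ φ - 1 := by linarith
  have h : (Real.exp φ / φ) ^ 2 - (2 * φ - 1) / φ ^ 4 * Real.exp (2 * φ) =
      (Real.exp φ * (φ - 1) / φ ^ 2) ^ 2 := by
    rw [two_mul φ, Real.exp_add]
    field_simp
    ring
  rw [h, Real.sqrt_sq (by positivity)]

lemma hubble_eq {φ : ℝ} (hφ : 1 ≤ φ) :
    (Real.exp φ / φ) / Real.sqrt ((2 * φ - 1) / φ ^ 4 * Real.exp (2 * φ)) =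
      φ / Real.sqrt (2 * φ - 1) := by
  have h0 : 0 < φ := by linarith
  have h1 : 0 < Real.sqrt (2 * φ - 1) := Real.sqrt_pos.2 (by linarith)
  rw [sqrt_v hφ]
  field_simp

lemma ratio_eq {φ : ℝ} (hφ : 1 ≤ φ) :
    φ / Real.sqrt (2 * φ - 1) / Real.sqrt (φ / 2) = Real.sqrt (1 + (2 * φ - 1)⁻¹) := by
  have h0 : 0 < φ := by linarith
  have h1 : 0 < 2 * φ - 1 := by linarith
  rw [div_div, ← Real.sqrt_mul h1.le]
  nth_rewrite 1 [← Real.sqrt_sq h0.le]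
  rw [← Real.sqrt_div (sq_nonneg _)]
  congr 1
  rw [div_eq_iff (by positivity)]
  linear_combination (-(φ / 2)) * inv_mul_cancel₀ h1.ne'

lemma tendsto_ratio :
    Filter.Tendsto
      (fun φ : ℝ =>
        ((Real.exp φ / φ) / Real.sqrt ((2 * φ - 1) / φ ^ 4 * Real.exp (2 * φ))) /
          Real.sqrt (φ / 2))
      Filter.atTop (nhds 1) := by
  have hlin : Filter.Tendsto (fun φ : ℝ => 2 * φ - 1) Filter.atTop Filter.atTop :=
    Filter.tendsto_atTop_add_const_right _ (-1)
      (Filter.tendsto_id.const_mul_atTop (by norm_num : (0 : ℝ) < 2))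
  have hlim : Filter.Tendsto (fun φ : ℝ => Real.sqrt (1 + (2 * φ - 1)⁻¹))
      Filter.atTop (nhds 1) := by
    simpa using ((tendsto_inv_atTop_zero.comp hlin).const_add (1 : ℝ)).sqrt
  refine hlim.congr' ?_
  filter_upwards [Filter.eventually_ge_atTop 1] with φ hφ
  rw [hubble_eq hφ, ratio_eq hφ]

/-- For the potential `v φ = ((2φ - 1)/φ⁴) * exp (2φ)`, the function
`h φ = exp φ / φ` satisfies the Hamilton–Jacobi equation `h' = √(h² - v)` for all
`φ ≥ 1`, with `h φ > √(v φ)` for `φ > 1`; moreover the corresponding modified Hubble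
parameter `𝔥 φ = h φ / √(v φ) = φ/√(2φ - 1)` is unbounded as `φ → ∞`, with
`𝔥 φ / √(φ/2) → 1` as `φ → ∞`.  (A potential outside the class `C_α` whose separatrix
is unbounded in the `𝔥` variable.) -/
theorem separatrix_stmt15 :
    (∀ φ : ℝ, 1 ≤ φ → HasDerivAt (fun x : ℝ => Real.exp x / x)
      (Real.sqrt ((Real.exp φ / φ) ^ 2 - (2 * φ - 1) / φ ^ 4 * Real.exp (2 * φ))) φ) ∧
    (∀ φ : ℝ, 1 < φ →
      Real.sqrt ((2 * φ - 1) / φ ^ 4 * Real.exp (2 * φ)) < Real.exp φ / φ) ∧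
    (∀ φ : ℝ, 1 ≤ φ →
      (Real.exp φ / φ) / Real.sqrt ((2 * φ - 1) / φ ^ 4 * Real.exp (2 * φ)) =
        φ / Real.sqrt (2 * φ - 1)) ∧
    Filter.Tendsto
      (fun φ : ℝ => (Real.exp φ / φ) / Real.sqrt ((2 * φ - 1) / φ ^ 4 * Real.exp (2 * φ)))
      Filter.atTop Filter.atTop ∧
    Filter.Tendsto
      (fun φ : ℝ =>
        ((Real.exp φ / φ) / Real.sqrt ((2 * φ - 1) / φ ^ 4 * Real.exp (2 * φ))) /
          Real.sqrt (φ / 2))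
      Filter.atTop (nhds 1) := by
  refine ⟨fun φ hφ => ?_, fun φ hφ => ?_, fun φ hφ => hubble_eq hφ, ?_, tendsto_ratio⟩
  · have h0 : φ ≠ 0 := by linarith
    rw [sqrt_h_sq_sub_v hφ]
    refine ((Real.hasDerivAt_exp φ).fun_div (hasDerivAt_id' φ) h0).congr_deriv ?_
    ring
  · have h0 : 0 < φ := by linarith
    -- `2φ - 1 < φ²` because `(φ - 1)² > 0`.
    have h1 : Real.sqrt (2 * φ - 1) < φ := by
      rw [Real.sqrt_lt' h0]
      nlinarith [mul_pos (sub_pos.2 hφ) (sub_pos.2 hφ)]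
    calc Real.sqrt ((2 * φ - 1) / φ ^ 4 * Real.exp (2 * φ))
        = Real.exp φ / φ ^ 2 * Real.sqrt (2 * φ - 1) := sqrt_v hφ.le
      _ < Real.exp φ / φ ^ 2 * φ := by gcongr
      _ = Real.exp φ / φ := by field_simp
  · have hsqrt : Filter.Tendsto (fun φ : ℝ => Real.sqrt (φ / 2)) Filter.atTop Filter.atTop :=
      Real.tendsto_sqrt_atTop.comp (Filter.tendsto_id.atTop_div_const (by norm_num))
    refine (tendsto_ratio.pos_mul_atTop one_pos hsqrt).congr' ?_
    filter_upwards [Filter.eventually_gt_atTop 0] with φ hφ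
    exact div_mul_cancel₀ _ (Real.sqrt_pos.2 (by linarith)).ne'
end

section
/- Let v : ℝ → ℝ be smooth and positive, and let φ : I → ℝ be a C² solution of the inflaton equation φ̈(t) + h(t)·φ̇(t) + (1/2)v'(φ(t)) = 0 on an open interval I, where h(t) = √(φ̇(t)² + v(φ(t))), and suppose φ̇(t) < 0 for all t in I. Then φ is strictly decreasing, and there exists a function H defined on the image J = φ(I) such that H(φ(t)) = h(t) for all t in I; this H is differentiable on J and satisfies the Hamilton–Jacobi equation H'(x) = √(H(x)² − v(x)) for all x in J, together with φ̇(t) = −H'(φ(t)) for all t in I. -/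
/-!
Differentiating `h² = φ'² + v(φ)` along the flow and substituting the inflaton equation
gives `h' = -φ'²`. Since `φ' < 0`, `φ` is strictly decreasing on the interval, so
`H := h ∘ φ⁻¹` is well defined; because `φ` is `C¹` with nonvanishing derivative, the inverse
function theorem makes `φ⁻¹` differentiable and the chain rule gives
`H'(φ t) = -φ'² / φ' = -φ' = √(H² - v)`.
-/

/-- The Hubble parameter decays at the rate `-φ'²` along a solution. -/
theorem hubble_hasDerivAt {v φ φ' : ℝ → ℝ} {t a : ℝ}
    (hv : DifferentiableAt ℝ v (φ t)) (hpos : 0 < v (φ t))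
    (hd1 : HasDerivAt φ (φ' t) t) (hd2 : HasDerivAt φ' a t)
    (heq : a + Real.sqrt ((φ' t) ^ 2 + v (φ t)) * φ' t + (1 / 2) * deriv v (φ t) = 0) :
    HasDerivAt (fun s => Real.sqrt ((φ' s) ^ 2 + v (φ s))) (-(φ' t) ^ 2) t := by
  have hp : 0 < (φ' t) ^ 2 + v (φ t) := by positivity
  have hs : 0 < Real.sqrt ((φ' t) ^ 2 + v (φ t)) := Real.sqrt_pos.2 hp
  have h1 : HasDerivAt (fun s => v (φ s)) (deriv v (φ t) * φ' t) t :=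
    hv.hasDerivAt.comp t hd1
  have h2 := ((hd2.pow 2).add h1).sqrt hp.ne'
  refine h2.congr_deriv ?_
  simp only [Pi.add_apply, Pi.pow_apply]
  rw [div_eq_iff (by positivity)]
  push_cast
  linear_combination 2 * φ' t * heq


/-- Let `v` be smooth and positive, and let `φ` be a `C²` solution (with
first and second derivatives `φ'` and `φ''`) of the inflaton equation
`φ̈ + h ⬝ φ̇ + (1/2) v'(φ) = 0` on an open interval `I`, where
`h t = √(φ̇ t ² + v (φ t))`, and suppose `φ̇ t < 0` on `I`.  Then `φ` is strictly
decreasing, and there exists a function `H` on the image `J = φ '' I` with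
`H (φ t) = h t` for all `t ∈ I`; this `H` is differentiable on `J` and satisfies the
Hamilton–Jacobi equation `H' x = √(H x ² - v x)` on `J`, together with
`φ̇ t = -H'(φ t)` for all `t ∈ I`. -/
theorem separatrix_stmt17 (v φ φ' φ'' : ℝ → ℝ) (I : Set ℝ)
    (hI : IsOpen I) (hIconn : I.OrdConnected)
    (hv : ContDiff ℝ (⊤ : ℕ∞) v) (hvpos : ∀ x, 0 < v x)
    (hd1 : ∀ t ∈ I, HasDerivAt φ (φ' t) t)
    (hd2 : ∀ t ∈ I, HasDerivAt φ' (φ'' t) t)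
    (hc2 : ContinuousOn φ'' I)
    (hneg : ∀ t ∈ I, φ' t < 0)
    (heq : ∀ t ∈ I,
      φ'' t + Real.sqrt ((φ' t) ^ 2 + v (φ t)) * φ' t + (1 / 2) * deriv v (φ t) = 0) :
    StrictAntiOn φ I ∧
    ∃ H : ℝ → ℝ,
      (∀ t ∈ I, H (φ t) = Real.sqrt ((φ' t) ^ 2 + v (φ t))) ∧
      (∀ x ∈ φ '' I,
        HasDerivWithinAt H (Real.sqrt ((H x) ^ 2 - v x)) (φ '' I) x) ∧
      (∀ t ∈ I, φ' t = -Real.sqrt ((H (φ t)) ^ 2 - v (φ t))) := by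
  have hanti : StrictAntiOn φ I := by
    refine strictAntiOn_of_deriv_neg hIconn.convex
      (fun t ht => (hd1 t ht).continuousAt.continuousWithinAt) fun t ht => ?_
    rw [(hd1 t (interior_subset ht)).deriv]
    exact hneg t (interior_subset ht)
  have hleft : ∀ t ∈ I, Function.invFunOn φ I (φ t) = t := fun t ht =>
    hanti.injOn.leftInvOn_invFunOn ht
  have hroot : ∀ t ∈ I,
      Real.sqrt (Real.sqrt ((φ' t) ^ 2 + v (φ t)) ^ 2 - v (φ t)) = -φ' t := fun t ht => by
    have := hvpos (φ t)
    rw [Real.sq_sqrt (by positivity), add_sub_cancel_right, Real.sqrt_sq_eq_abs,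
      abs_of_neg (hneg t ht)]
  refine ⟨hanti, fun x => Real.sqrt ((φ' (Function.invFunOn φ I x)) ^ 2
    + v (φ (Function.invFunOn φ I x))), fun t ht => ?_, ?_, fun t ht => ?_⟩
  · simp only [hleft t ht]
  · rintro _ ⟨t, ht, rfl⟩
    have hstrict : HasStrictDerivAt φ (φ' t) t :=
      hasStrictDerivAt_of_hasDerivAt_of_continuousAt
        (by filter_upwards [hI.mem_nhds ht] with s hs using hd1 s hs)
        (hd2 t ht).continuousAt
    have hinv : HasDerivAt (Function.invFunOn φ I) (φ' t)⁻¹ (φ t) :=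
      (hstrict.to_local_left_inverse (hneg t ht).ne
        (by filter_upwards [hI.mem_nhds ht] with s hs using hleft s hs)).hasDerivAt
    have hh := hubble_hasDerivAt ((hv.differentiable (by simp)).differentiableAt)
      (hvpos _) (hd1 t ht) (hd2 t ht) (heq t ht)
    rw [← hleft t ht] at hh
    have hc := HasDerivAt.comp (φ t) (by simpa only [hleft t ht] using hh) hinv
    refine (hc.congr_deriv ?_).hasDerivWithinAt
    simp only [hleft t ht, hroot t ht]
    have := (hneg t ht).ne
    field_simp
  · simp only [hleft t ht, hroot t ht, neg_neg]
end

section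
/- Fix 0 < α < 1 and φ₀ ∈ ℝ, and let t* = −e^{−αφ₀}/α². Then the function φ(t) = −(1/α)·log(α²t + e^{−αφ₀}), defined for t > t*, is a solution of the inflaton equation φ̈(t) + h(t)·φ̇(t) + (1/2)v'(φ(t)) = 0 for the exponential potential v(φ) = (1 − α²)e^{2αφ}, where h(t) = √(φ̇(t)² + v(φ(t))); moreover h(t) = 1/(α²t + e^{−αφ₀}), φ(t) → +∞ and h(t) → +∞ as t → t*⁺ (the inflaton field of the separatrix blows up at the finite time t*). -/
/-! Write `s t = α² t + exp (-αφ₀)`, which is positive for `t > t*` and tends to `0⁺` as `t → t*⁺`.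
Since `φ = -(1/α) log s`, the potential energy is `v(φ) = (1 - α²) / s²`, and the kinetic energy is
`φ̇² = α² / s²`; they add up to `1 / s²`, so `h = 1 / s`. The equation of motion then becomes
`(α³ - α + α (1 - α²)) / s² = 0`, and both blow-up claims follow from `s → 0⁺`. -/

/-- Along `x = -(1/α) log s` the exponential factor of the potential is `s⁻²`. -/
lemma exp_separatrix {α s : ℝ} (hα : 0 < α) (hs : 0 < s) :
    Real.exp (2 * α * (-(1 / α) * Real.log s)) = 1 / s ^ 2 := by
  have h : 2 * α * (-(1 / α) * Real.log s) = -(Real.log s + Real.log s) := by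
    field_simp
    ring
  rw [h, Real.exp_neg, Real.exp_add, Real.exp_log hs]
  field_simp

/-- Fix `0 < α < 1` and `φ₀ ∈ ℝ`, and let `t* = -exp (-αφ₀)/α²`.  Then
the function `φ t = -(1/α) log (α² t + exp (-αφ₀))`, defined for `t > t*`, is a solution
of the inflaton equation `φ̈ + h ⬝ φ̇ + (1/2) v'(φ) = 0` for the exponential potential
`v x = (1 - α²) exp (2αx)`, where `h t = √(φ̇ t ² + v (φ t))`; moreover
`h t = 1/(α² t + exp (-αφ₀))`, and `φ t → +∞`, `h t → +∞` as `t → t*⁺` (the inflaton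
field of the separatrix blows up at the finite time `t*`). -/
theorem separatrix_stmt18 (α φ₀ : ℝ) (hα0 : 0 < α) (hα1 : α < 1) :
    let tstar : ℝ := -Real.exp (-α * φ₀) / α ^ 2
    let φf : ℝ → ℝ := fun t => -(1 / α) * Real.log (α ^ 2 * t + Real.exp (-α * φ₀))
    let φf' : ℝ → ℝ := fun t => -α / (α ^ 2 * t + Real.exp (-α * φ₀))
    let φf'' : ℝ → ℝ := fun t => α ^ 3 / (α ^ 2 * t + Real.exp (-α * φ₀)) ^ 2
    let v : ℝ → ℝ := fun x => (1 - α ^ 2) * Real.exp (2 * α * x)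
    let hf : ℝ → ℝ := fun t => Real.sqrt ((φf' t) ^ 2 + v (φf t))
    (∀ t, tstar < t → HasDerivAt φf (φf' t) t) ∧
    (∀ t, tstar < t → HasDerivAt φf' (φf'' t) t) ∧
    (∀ t, tstar < t → φf'' t + hf t * φf' t + (1 / 2) * deriv v (φf t) = 0) ∧
    (∀ t, tstar < t → hf t = 1 / (α ^ 2 * t + Real.exp (-α * φ₀))) ∧
    Filter.Tendsto φf (nhdsWithin tstar (Set.Ioi tstar)) Filter.atTop ∧
    Filter.Tendsto hf (nhdsWithin tstar (Set.Ioi tstar)) Filter.atTop := by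
  intro tstar φf φf' φf'' v hf
  have hpos : ∀ t, tstar < t → 0 < α ^ 2 * t + Real.exp (-α * φ₀) := by
    intro t ht
    have h := (div_lt_iff₀ (by positivity : 0 < α ^ 2)).1 ht
    linarith
  have hlin : ∀ t, HasDerivAt (fun t => α ^ 2 * t + Real.exp (-α * φ₀)) (α ^ 2) t := by
    intro t
    simpa using ((hasDerivAt_id t).const_mul (α ^ 2)).add_const (Real.exp (-α * φ₀))
  have hh : ∀ t, tstar < t → hf t = 1 / (α ^ 2 * t + Real.exp (-α * φ₀)) := by
    intro t ht
    have hs := hpos t ht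
    simp only [hf, φf', v, φf]
    rw [exp_separatrix hα0 hs]
    generalize α ^ 2 * t + Real.exp (-α * φ₀) = s at hs ⊢
    rw [show (-α / s) ^ 2 + (1 - α ^ 2) * (1 / s ^ 2) = (1 / s) ^ 2 by ring]
    exact Real.sqrt_sq (by positivity)
  have hv : ∀ x, deriv v x = (1 - α ^ 2) * (Real.exp (2 * α * x) * (2 * α)) := by
    intro x
    have h := (((hasDerivAt_id x).const_mul (2 * α)).exp).const_mul (1 - α ^ 2)
    simpa [v] using h.deriv
  have hlim : Filter.Tendsto (fun t => α ^ 2 * t + Real.exp (-α * φ₀))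
      (nhdsWithin tstar (Set.Ioi tstar)) (nhdsWithin 0 (Set.Ioi 0)) := by
    refine tendsto_nhdsWithin_iff.2 ⟨?_, ?_⟩
    · have h0 : α ^ 2 * tstar + Real.exp (-α * φ₀) = 0 := by
        simp only [tstar]
        field_simp
        ring
      have h := (hlin tstar).continuousAt.tendsto
      rw [h0] at h
      exact h.mono_left nhdsWithin_le_nhds
    · filter_upwards [self_mem_nhdsWithin] with t ht using hpos t ht
  refine ⟨?_, ?_, ?_, hh, ?_, ?_⟩
  · intro t ht
    have hs := hpos t ht
    have h := ((hlin t).log hs.ne').const_mul (-(1 / α))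
    refine h.congr_deriv ?_
    simp only [φf']
    field_simp
  · intro t ht
    have hs := hpos t ht
    have h := (hasDerivAt_const t (-α)).div (hlin t) hs.ne'
    refine h.congr_deriv ?_
    simp only [φf'']
    ring
  · intro t ht
    have hs := hpos t ht
    rw [hh t ht, hv]
    simp only [φf, φf', φf'']
    rw [exp_separatrix hα0 hs]
    generalize α ^ 2 * t + Real.exp (-α * φ₀) = s
    ring
  · exact (Real.tendsto_log_nhdsGT_zero.comp hlim).const_mul_atBot_of_neg
      (neg_lt_zero.2 (by positivity))
  · refine (tendsto_inv_nhdsGT_zero.comp hlim).congr' ?_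
    filter_upwards [self_mem_nhdsWithin] with t ht
    rw [hh t ht, one_div]
    rfl
end

section
/- For any φ₀ > 0, the function φ(t) = φ₀·e^{−2t}, defined for all t ∈ ℝ, is a solution of the inflaton equation φ̈(t) + h(t)·φ̇(t) + (1/2)v'(φ(t)) = 0 for the Higgs potential v(φ) = (φ² − 1)², where h(t) = √(φ̇(t)² + v(φ(t))); moreover h(t) = φ(t)² + 1, so this solution corresponds to the separatrix h(φ) = φ² + 1 of the Higgs model and is defined for all times (no blow-up). -/
/-!
With `x = φ₀ exp (-2t)` one has `φ̇ = -2x` and `φ̈ = 4x`. The square root in the Hubble parameter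
resolves because `(2x)² + (x² - 1)² = (x² + 1)²` and `x² + 1 ≥ 0`; the inflaton equation then
reduces to the polynomial identity `4x - 2x (x² + 1) + 2x (x² - 1) = 0`.
-/

/-- For any `φ₀ > 0`, the function `φ t = φ₀ exp (-2t)`, defined for
all `t ∈ ℝ`, is a solution of the inflaton equation `φ̈ + h ⬝ φ̇ + (1/2) v'(φ) = 0` for
the Higgs potential `v x = (x² - 1)²`, where `h t = √(φ̇ t ² + v (φ t))`; moreover
`h t = φ t ² + 1`, so this solution corresponds to the separatrix `h = φ² + 1` of the
Higgs model and is defined for all times (no blow-up). -/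
theorem separatrix_stmt19 (φ₀ : ℝ) (hφ₀ : 0 < φ₀) :
    let φf : ℝ → ℝ := fun t => φ₀ * Real.exp (-2 * t)
    let φf' : ℝ → ℝ := fun t => -2 * φ₀ * Real.exp (-2 * t)
    let φf'' : ℝ → ℝ := fun t => 4 * φ₀ * Real.exp (-2 * t)
    let v : ℝ → ℝ := fun x => (x ^ 2 - 1) ^ 2
    let hf : ℝ → ℝ := fun t => Real.sqrt ((φf' t) ^ 2 + v (φf t))
    (∀ t : ℝ, HasDerivAt φf (φf' t) t) ∧
    (∀ t : ℝ, HasDerivAt φf' (φf'' t) t) ∧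
    (∀ t : ℝ, φf'' t + hf t * φf' t + (1 / 2) * deriv v (φf t) = 0) ∧
    (∀ t : ℝ, hf t = (φf t) ^ 2 + 1) := by
  intro φf φf' φf'' v hf
  have hE (t : ℝ) : HasDerivAt (fun s : ℝ => Real.exp (-2 * s)) (Real.exp (-2 * t) * -2) t := by
    simpa using ((hasDerivAt_id t).const_mul (-2)).exp
  have hH (t : ℝ) : hf t = (φf t) ^ 2 + 1 := by
    have h : (φf' t) ^ 2 + v (φf t) = ((φf t) ^ 2 + 1) ^ 2 := by
      simp only [φf', φf, v]
      ring
    simp only [hf]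
    rw [h, Real.sqrt_sq (by positivity)]
  have hV (x : ℝ) : HasDerivAt v (4 * x * (x ^ 2 - 1)) x := by
    refine HasDerivAt.congr_deriv (((hasDerivAt_pow 2 x).sub_const 1).fun_pow 2) ?_
    norm_num
    ring
  have h1 (t : ℝ) : HasDerivAt φf (φf' t) t := by
    refine ((hE t).const_mul φ₀).congr_deriv ?_
    simp only [φf']
    ring
  have h2 (t : ℝ) : HasDerivAt φf' (φf'' t) t := by
    refine ((hE t).const_mul (-2 * φ₀)).congr_deriv ?_
    simp only [φf'']
    ring
  have h3 (t : ℝ) : φf'' t + hf t * φf' t + (1 / 2) * deriv v (φf t) = 0 := by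
    rw [hH, (hV _).deriv]
    simp only [φf, φf', φf'']
    ring
  exact ⟨h1, h2, h3, hH⟩
end
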